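/- arXiv:1008.3514 — 2 statements merged into one kernel-verified Lean document; each statement's English description precedes it below -/
import Mathlib

section
/- (Drift condition for patched MALA over unit physical time.) Let U satisfy Assumption 1. Then there exist θ ∈ (0, β−c) and positive constants γ̄, K, E_⋆ and h_c such that for every stepsize h < h_c and every x ∈ R_h, the ⌊1/h⌋-step patched MALA kernel satisfies (P̄_h^{⌊1/h⌋} Φ_θ)(x) ≤ e^{−γ̄}·Φ_θ(x) + K. -/
open MeasureTheory Real Filter
open scoped ENNReal

noncomputable section

abbrev Euc (n : ℕ) := EuclideanSpace ℝ (Fin n)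

/-- Second derivative of `U` at `x` as a bilinear form. -/
def D2 {n : ℕ} (U : Euc n → ℝ) (x v w : Euc n) : ℝ :=
  iteratedFDeriv ℝ 2 U x ![v, w]

/-- Laplacian of `U` at `x`. -/
def lapl {n : ℕ} (U : Euc n → ℝ) (x : Euc n) : ℝ :=
  ∑ i, D2 U x (EuclideanSpace.single i 1) (EuclideanSpace.single i 1)

/-- Assumption 1 on the potential `U`. -/
structure Assumption1 (n : ℕ) (β : ℝ) (U : Euc n → ℝ) where
  smooth : ContDiff ℝ 4 U
  c : ℝ
  d : ℝ
  EB : ℝ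
  c_pos : 0 < c
  c_lt : c < β
  d_pos : 0 < d
  one_le : ∀ x, 1 ≤ U x
  quad_growth : ∀ C > (0:ℝ), ∃ E > (0:ℝ), ∀ x, U x > E → C * (1 + ‖x‖ ^ 2) ≤ U x
  driftB : ∀ x, U x > EB → lapl U x ≤ c * ‖gradient U x‖ ^ 2 - d * U x
  hess_lb : ∃ C : ℝ, 0 ≤ C ∧ ∀ x η : Euc n, -C * ‖η‖ ^ 2 ≤ D2 U x η η
  deriv_bound : ∃ C > (0:ℝ), ∀ x,
    ‖iteratedFDeriv ℝ 4 U x‖ ⊔ ‖iteratedFDeriv ℝ 3 U x‖ ⊔ ‖iteratedFDeriv ℝ 2 U x‖ ⊔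
      ‖gradient U x‖ ≤ C * U x

/-- The Gibbs measure with density `Z⁻¹ exp(-β U x)`. -/
def gibbs (n : ℕ) (β : ℝ) (U : Euc n → ℝ) : Measure (Euc n) :=
  volume.withDensity fun x => ENNReal.ofReal (exp (-β * U x) / ∫ y, exp (-β * U y))

/-- Total variation distance, `‖μ - ν‖_TV = 2 sup_A |μ(A) - ν(A)|`. -/
def tvDist {α : Type*} [MeasurableSpace α] (μ ν : Measure α) : ℝ :=
  2 * ⨆ A : {A : Set α // MeasurableSet A}, |(μ A.1).toReal - (ν A.1).toReal|

/-- Forward Euler transition density `q_h(x,y)`. -/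
def eulerDensity (n : ℕ) (β h : ℝ) (U : Euc n → ℝ) (x y : Euc n) : ℝ :=
  (4 * π * β⁻¹ * h) ^ (-(n : ℝ) / 2) *
    exp (-‖y - x + h • gradient U x‖ ^ 2 / (4 * β⁻¹ * h))

/-- MALA acceptance probability `α_h(x,y)`. -/
def accept (n : ℕ) (β h : ℝ) (U : Euc n → ℝ) (x y : Euc n) : ℝ :=
  min 1 ((eulerDensity n β h U y x * exp (-β * U y)) /
         (eulerDensity n β h U x y * exp (-β * U x)))

/-- One-step MALA transition kernel. -/
def malaKernel (n : ℕ) (β h : ℝ) (U : Euc n → ℝ) (x : Euc n) : Measure (Euc n) :=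
  volume.withDensity (fun y => ENNReal.ofReal (accept n β h U x y * eulerDensity n β h U x y))
  + (1 - ∫⁻ y, ENNReal.ofReal (accept n β h U x y * eulerDensity n β h U x y)) • Measure.dirac x

/-- `k`-step iterate of a transition kernel. -/
def iterKernel {α : Type*} [MeasurableSpace α] (κ : α → Measure α) : ℕ → α → Measure α
  | 0, x => Measure.dirac x
  | k + 1, x => (iterKernel κ k x).bind κ

/-- The level set `R_h = {x : U(x) < E_⋆ h^{-1/4}}`. -/
def Rset (n : ℕ) (h Estar : ℝ) (U : Euc n → ℝ) : Set (Euc n) :=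
  {x | U x < Estar * h ^ (-(1:ℝ) / 4)}

open scoped Classical in
/-- Patched MALA acceptance probability. -/
def acceptBar (n : ℕ) (β h Estar : ℝ) (U : Euc n → ℝ) (x y : Euc n) : ℝ :=
  if x ∈ Rset n h Estar U ∧ y ∈ Rset n h Estar U then accept n β h U x y else 0

/-- One-step patched MALA transition kernel. -/
def patchedKernel (n : ℕ) (β h Estar : ℝ) (U : Euc n → ℝ) (x : Euc n) : Measure (Euc n) :=
  volume.withDensity
    (fun y => ENNReal.ofReal (acceptBar n β h Estar U x y * eulerDensity n β h U x y))
  + (1 - ∫⁻ y, ENNReal.ofReal (acceptBar n β h Estar U x y * eulerDensity n β h U x y)) •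
      Measure.dirac x

/-- Standard Gaussian measure `N(0, I)` on `ℝ^n`. -/
def stdGaussian (n : ℕ) : Measure (Euc n) :=
  volume.withDensity fun ξ => ENNReal.ofReal ((2 * π) ^ (-(n : ℝ) / 2) * exp (-‖ξ‖ ^ 2 / 2))

/-- Forward Euler transition kernel. -/
def eulerKernel (n : ℕ) (β h : ℝ) (U : Euc n → ℝ) (x : Euc n) : Measure (Euc n) :=
  volume.withDensity fun y => ENNReal.ofReal (eulerDensity n β h U x y)

/-!
Put `s = h ^ (1 / 4)`, so that `U < 1 / s` on `R_h` for `E_⋆ = 1`. There all derivatives of `U` are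
of order `1 / s`, while the noise of an Euler step has size `s ^ 2`. Taylor expansion of
`exp (θ * (U y - U x)) - 1` to second order therefore produces the generator of the diffusion with a
remainder of order `s ^ 5`, negligible against the time step `h = s ^ 4`. The Metropolis correction
costs only another `O(s ^ 5)`, because the log acceptance ratio is `β` times a trapezoidal-rule
error plus a small term, and rejecting proposals that leave `R_h` can only decrease `Φ_θ`. For small
`θ` the drift condition (B) turns the generator term into a contraction by `1 - γ h` wherever `U` is
large. Iterating `⌊1 / h⌋` times turns `1 - γ h` into a factor that does not depend on `h`, while
the per-step constants `h K` add up to at most `K`.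
-/

theorem bilin_sub_sub {E : Type*} [NormedAddCommGroup E] [NormedSpace ℝ E]
    (A : E →L[ℝ] E →L[ℝ] ℝ) (z m : E) :
    A (z - m) (z - m) = A z z - (A m + A.flip m) z + A m m := by
  simp
  ring

theorem exists_bilin_self_eq_sq_norm (E : Type*) [NormedAddCommGroup E] [InnerProductSpace ℝ E] :
    ∃ A : E →L[ℝ] E →L[ℝ] ℝ, ∀ z, A z z = ‖z‖ ^ 2 :=
  ⟨innerSL ℝ, real_inner_self_eq_norm_sq⟩

theorem exp_mul_norm_sub_le {E : Type*} [SeminormedAddCommGroup E] {a b : ℝ} (ha : 0 ≤ a)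
    (hb : 0 < b) (z m : E) :
    exp (a * ‖z - m‖) ≤ exp (a * ‖m‖ + a ^ 2 / (2 * b)) * exp (b / 2 * ‖z‖ ^ 2) := by
  have hamgm : a * ‖z‖ ≤ a ^ 2 / (2 * b) + b / 2 * ‖z‖ ^ 2 := by
    have hsq : 0 ≤ (a - b * ‖z‖) ^ 2 / (2 * b) := by positivity
    have : (a - b * ‖z‖) ^ 2 / (2 * b) = a ^ 2 / (2 * b) - a * ‖z‖ + b / 2 * ‖z‖ ^ 2 := by
      field_simp
      ring
    linarith
  rw [← exp_add]
  gcongr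
  linarith [mul_le_mul_of_nonneg_left (norm_sub_le z m) ha]

section IsotropicGaussian

variable {E : Type*} [NormedAddCommGroup E] [InnerProductSpace ℝ E] [FiniteDimensional ℝ E]
  [MeasurableSpace E] [BorelSpace E] {b : ℝ}

variable (E b) in
/-- The centred Gaussian measure with density proportional to `exp (-b ‖z‖²)`, i.e. with covariance
`(2 b)⁻¹` times the identity. The noise of a forward Euler step of size `h` at inverse temperature
`β` is the case `b = β / (4 h)`. -/
def isotropicGaussian : Measure E :=
  volume.withDensity fun z =>
    ENNReal.ofReal ((π / b) ^ (-(Module.finrank ℝ E : ℝ) / 2) * exp (-b * ‖z‖ ^ 2))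

theorem integrable_exp_neg_mul_sq_norm (hb : 0 < b) :
    Integrable fun z : E => exp (-b * ‖z‖ ^ 2) := by
  apply Integrable.of_integral_ne_zero
  rw [GaussianFourier.integral_rexp_neg_mul_sq_norm hb]
  positivity

theorem integral_isotropicGaussian (hb : 0 < b) (f : E → ℝ) :
    ∫ z, f z ∂isotropicGaussian E b =
      (π / b) ^ (-(Module.finrank ℝ E : ℝ) / 2) * ∫ z, exp (-b * ‖z‖ ^ 2) * f z := by
  rw [isotropicGaussian, integral_withDensity_eq_integral_toReal_smul (by fun_prop) (by simp),
    ← integral_const_mul]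
  refine integral_congr_ae (.of_forall fun z => ?_)
  simp only [smul_eq_mul]
  rw [ENNReal.toReal_ofReal (by positivity), mul_assoc]

theorem integrable_isotropicGaussian_iff (hb : 0 < b) {f : E → ℝ} :
    Integrable f (isotropicGaussian E b) ↔ Integrable fun z => exp (-b * ‖z‖ ^ 2) * f z := by
  have hc : (π / b) ^ (-(Module.finrank ℝ E : ℝ) / 2) ≠ 0 := by positivity
  rw [isotropicGaussian, integrable_withDensity_iff_integrable_smul' (by fun_prop) (by simp),
    ← integrable_const_mul_iff hc.isUnit fun z => exp (-b * ‖z‖ ^ 2) * f z]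
  refine integrable_congr (.of_forall fun z => ?_)
  simp only [smul_eq_mul]
  rw [ENNReal.toReal_ofReal (by positivity), mul_assoc]

theorem isProbabilityMeasure_isotropicGaussian (hb : 0 < b) :
    IsProbabilityMeasure (isotropicGaussian E b) := by
  constructor
  rw [isotropicGaussian, withDensity_apply _ MeasurableSet.univ, Measure.restrict_univ,
    ← ofReal_integral_eq_lintegral_ofReal
      ((integrable_exp_neg_mul_sq_norm hb).const_mul _) (.of_forall fun z => by positivity),
    integral_const_mul, GaussianFourier.integral_rexp_neg_mul_sq_norm hb,
    ← rpow_add (by positivity)]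
  simp [neg_div]

theorem integrable_exp_mul_sq_norm_isotropicGaussian (hb : 0 < b) {c : ℝ} (hc : c < b) :
    Integrable (fun z => exp (c * ‖z‖ ^ 2)) (isotropicGaussian E b) := by
  rw [integrable_isotropicGaussian_iff hb]
  convert integrable_exp_neg_mul_sq_norm (E := E) (sub_pos.2 hc) using 2 with z
  rw [← exp_add]
  ring_nf

theorem integral_exp_mul_sq_norm_isotropicGaussian (hb : 0 < b) {c : ℝ} (hc : c < b) :
    ∫ z, exp (c * ‖z‖ ^ 2) ∂isotropicGaussian E b =
      (b / (b - c)) ^ ((Module.finrank ℝ E : ℝ) / 2) := by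
  have hbc := sub_pos.2 hc
  have h (z : E) : exp (-b * ‖z‖ ^ 2) * exp (c * ‖z‖ ^ 2) = exp (-(b - c) * ‖z‖ ^ 2) := by
    rw [← exp_add]
    ring_nf
  simp only [integral_isotropicGaussian hb, h, GaussianFourier.integral_rexp_neg_mul_sq_norm hbc]
  rw [neg_div, rpow_neg (by positivity), ← inv_rpow (by positivity),
    ← mul_rpow (by positivity) (by positivity)]
  congr 1
  field_simp

theorem integrable_isotropicGaussian_of_le (hb : 0 < b) {f : E → ℝ}
    (hf : AEStronglyMeasurable f (isotropicGaussian E b)) {c M : ℝ} (hc : c < b)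
    (hM : ∀ z, |f z| ≤ M * exp (c * ‖z‖ ^ 2)) : Integrable f (isotropicGaussian E b) :=
  ((integrable_exp_mul_sq_norm_isotropicGaussian hb hc).const_mul M).mono' hf (.of_forall hM)

theorem integrable_isotropicGaussian_of_le_add_sq_norm (hb : 0 < b) {f : E → ℝ}
    (hf : AEStronglyMeasurable f (isotropicGaussian E b)) {M N : ℝ}
    (hM : ∀ z, |f z| ≤ M + N * ‖z‖ ^ 2) : Integrable f (isotropicGaussian E b) := by
  refine integrable_isotropicGaussian_of_le hb hf (c := b / 2) (M := |M| + |N| * (2 / b))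
    (half_lt_self hb) fun z => (hM z).trans ?_
  have hexp := add_one_le_exp (b / 2 * ‖z‖ ^ 2)
  have hone : 1 ≤ exp (b / 2 * ‖z‖ ^ 2) := one_le_exp (by positivity)
  have hsq : ‖z‖ ^ 2 ≤ 2 / b * exp (b / 2 * ‖z‖ ^ 2) := by
    rw [div_mul_eq_mul_div, le_div_iff₀ hb]
    linarith
  calc M + N * ‖z‖ ^ 2 ≤ |M| * 1 + |N| * ‖z‖ ^ 2 := by
        rw [mul_one]
        gcongr <;> exact le_abs_self _
    _ ≤ |M| * exp (b / 2 * ‖z‖ ^ 2) + |N| * (2 / b * exp (b / 2 * ‖z‖ ^ 2)) := by gcongr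
    _ = _ := by ring

theorem integrable_clm_isotropicGaussian (hb : 0 < b) (l : E →L[ℝ] ℝ) :
    Integrable l (isotropicGaussian E b) := by
  refine integrable_isotropicGaussian_of_le_add_sq_norm hb l.continuous.aestronglyMeasurable
    (M := ‖l‖) (N := ‖l‖) fun z => (l.le_opNorm z).trans ?_
  nlinarith [norm_nonneg l, norm_nonneg z, sq_nonneg (‖z‖ - 1)]

theorem integrable_bilin_isotropicGaussian (hb : 0 < b) (A : E →L[ℝ] E →L[ℝ] ℝ) :
    Integrable (fun z => A z z) (isotropicGaussian E b) :=
  integrable_isotropicGaussian_of_le_add_sq_norm hb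
    (by fun_prop : Continuous fun z => A z z).aestronglyMeasurable (M := 0) (N := ‖A‖)
    fun z => (A.le_opNorm₂ z z).trans (by linarith)

theorem integral_mul_inner_isotropicGaussian (hb : 0 < b) {f : E → ℝ} {v : E}
    (hf : Differentiable ℝ f) (hfi : Integrable f (isotropicGaussian E b))
    (hf' : Integrable (fun z => fderiv ℝ f z v) (isotropicGaussian E b))
    (hfv : Integrable (fun z => f z * inner ℝ z v) (isotropicGaussian E b)) :
    ∫ z, f z * inner ℝ z v ∂isotropicGaussian E b =
      (2 * b)⁻¹ * ∫ z, fderiv ℝ f z v ∂isotropicGaussian E b := by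
  rw [integrable_isotropicGaussian_iff hb] at hfi hf' hfv
  have hderiv (z : E) : HasFDerivAt (fun z : E => exp (-b * ‖z‖ ^ 2))
      (exp (-b * ‖z‖ ^ 2) • -b • (2 : ℕ) • innerSL ℝ z) z :=
    (((hasStrictFDerivAt_norm_sq z).hasFDerivAt).const_mul (-b)).exp
  have happly (z : E) : f z * fderiv ℝ (fun z : E => exp (-b * ‖z‖ ^ 2)) z v =
      -(2 * b) * (exp (-b * ‖z‖ ^ 2) * (f z * inner ℝ z v)) := by
    rw [(hderiv z).fderiv]
    simp only [smul_apply, innerSL_apply_apply, smul_eq_mul, nsmul_eq_mul]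
    ring
  have hparts := integral_mul_fderiv_eq_neg_fderiv_mul_of_integrable (μ := volume) (v := v)
    (f := f) (g := fun z : E => exp (-b * ‖z‖ ^ 2)) (by simpa only [mul_comm] using hf')
    (by simpa only [happly] using hfv.const_mul _) (by simpa only [mul_comm] using hfi)
    (fun z _ => hf z) (fun z _ => (hderiv z).differentiableAt)
  simp only [happly, integral_const_mul, mul_comm (fderiv ℝ f _ v)] at hparts
  have hint : ∫ z, exp (-b * ‖z‖ ^ 2) * fderiv ℝ f z v =
      2 * b * ∫ z, exp (-b * ‖z‖ ^ 2) * (f z * inner ℝ z v) := by linarith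
  rw [integral_isotropicGaussian hb, integral_isotropicGaussian hb, hint]
  field_simp

theorem integral_clm_isotropicGaussian (hb : 0 < b) (l : E →L[ℝ] ℝ) :
    ∫ z, l z ∂isotropicGaussian E b = 0 := by
  have hodd := integral_neg_eq_self (fun z : E => exp (-b * ‖z‖ ^ 2) * l z) volume
  simp only [norm_neg, map_neg, mul_neg, integral_neg] at hodd
  rw [integral_isotropicGaussian hb, mul_eq_zero]
  right
  linarith

theorem integral_clm_mul_inner_isotropicGaussian (hb : 0 < b) (l : E →L[ℝ] ℝ) (v : E) :
    ∫ z, l z * inner ℝ z v ∂isotropicGaussian E b = l v / (2 * b) := by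
  have := isProbabilityMeasure_isotropicGaussian (E := E) hb
  have hint := integrable_bilin_isotropicGaussian hb (l.smulRight (innerSL ℝ v))
  rw [integral_mul_inner_isotropicGaussian hb l.differentiable
    (integrable_clm_isotropicGaussian hb l) (by simp) (by simpa [real_inner_comm v] using hint)]
  simp [div_eq_inv_mul]

theorem integral_bilin_isotropicGaussian (hb : 0 < b) {ι : Type*} [Fintype ι]
    (e : OrthonormalBasis ι ℝ E) (A : E →L[ℝ] E →L[ℝ] ℝ) :
    ∫ z, A z z ∂isotropicGaussian E b = (∑ i, A (e i) (e i)) / (2 * b) := by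
  have hexpand (z : E) : A z z = ∑ i, A.flip (e i) z * inner ℝ z (e i) := by
    calc A z z = A z (∑ i, inner ℝ (e i) z • e i) := by rw [e.sum_repr' z]
      _ = _ := by simp [real_inner_comm z, mul_comm]
  have hint (i : ι) := integrable_bilin_isotropicGaussian hb
    ((A.flip (e i)).smulRight (innerSL ℝ (e i)))
  rw [integral_congr_ae (.of_forall hexpand), integral_finsetSum _ fun i _ => by
    simpa [real_inner_comm (e i)] using hint i, Finset.sum_div]
  exact Finset.sum_congr rfl fun i _ => integral_clm_mul_inner_isotropicGaussian hb _ _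

theorem integrable_clm_sub_isotropicGaussian (hb : 0 < b) (l : E →L[ℝ] ℝ) (m : E) :
    Integrable (fun z => l (z - m)) (isotropicGaussian E b) := by
  have := isProbabilityMeasure_isotropicGaussian (E := E) hb
  exact ((integrable_clm_isotropicGaussian hb l).sub (integrable_const (l m))).congr
    (.of_forall fun z => (map_sub l z m).symm)

theorem integral_clm_sub_isotropicGaussian (hb : 0 < b) (l : E →L[ℝ] ℝ) (m : E) :
    ∫ z, l (z - m) ∂isotropicGaussian E b = -l m := by
  have := isProbabilityMeasure_isotropicGaussian (E := E) hb
  simp only [map_sub]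
  rw [integral_sub (integrable_clm_isotropicGaussian hb l) (integrable_const _),
    integral_clm_isotropicGaussian hb]
  simp

theorem integrable_bilin_sub_isotropicGaussian (hb : 0 < b) (A : E →L[ℝ] E →L[ℝ] ℝ) (m : E) :
    Integrable (fun z => A (z - m) (z - m)) (isotropicGaussian E b) := by
  have := isProbabilityMeasure_isotropicGaussian (E := E) hb
  exact (((integrable_bilin_isotropicGaussian hb A).sub
    (integrable_clm_isotropicGaussian hb (A m + A.flip m))).add (integrable_const (A m m))).congr
    (.of_forall fun z => (bilin_sub_sub A z m).symm)

theorem integral_bilin_sub_isotropicGaussian (hb : 0 < b) {ι : Type*} [Fintype ι]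
    (e : OrthonormalBasis ι ℝ E) (A : E →L[ℝ] E →L[ℝ] ℝ) (m : E) :
    ∫ z, A (z - m) (z - m) ∂isotropicGaussian E b = (∑ i, A (e i) (e i)) / (2 * b) + A m m := by
  have := isProbabilityMeasure_isotropicGaussian (E := E) hb
  have hA := integrable_bilin_isotropicGaussian hb A
  have hl := integrable_clm_isotropicGaussian hb (A m + A.flip m)
  have hAl : Integrable (fun z => A z z - (A m + A.flip m) z) (isotropicGaussian E b) := hA.sub hl
  simp only [bilin_sub_sub]
  rw [integral_add hAl (integrable_const _), integral_sub hA hl,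
    integral_bilin_isotropicGaussian hb e, integral_clm_isotropicGaussian hb]
  simp

theorem integrable_sq_norm_sub_isotropicGaussian (hb : 0 < b) (m : E) :
    Integrable (fun z => ‖z - m‖ ^ 2) (isotropicGaussian E b) := by
  obtain ⟨A, hA⟩ := exists_bilin_self_eq_sq_norm E
  simpa only [hA] using integrable_bilin_sub_isotropicGaussian hb A m

theorem integral_sq_norm_sub_isotropicGaussian (hb : 0 < b) (m : E) :
    ∫ z, ‖z - m‖ ^ 2 ∂isotropicGaussian E b = Module.finrank ℝ E / (2 * b) + ‖m‖ ^ 2 := by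
  obtain ⟨A, hA⟩ := exists_bilin_self_eq_sq_norm E
  simpa [-map_sub, hA] using
    integral_bilin_sub_isotropicGaussian hb (stdOrthonormalBasis ℝ E) A m

theorem integrable_exp_mul_norm_sub_isotropicGaussian (hb : 0 < b) {a : ℝ} (ha : 0 ≤ a) (m : E) :
    Integrable (fun z => exp (a * ‖z - m‖)) (isotropicGaussian E b) :=
  integrable_isotropicGaussian_of_le hb
    (by fun_prop : Continuous fun z => exp (a * ‖z - m‖)).aestronglyMeasurable (half_lt_self hb)
    fun z => by simpa only [abs_exp] using exp_mul_norm_sub_le ha hb z m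

theorem integral_exp_mul_norm_sub_isotropicGaussian_le (hb : 0 < b) {a : ℝ} (ha : 0 ≤ a) (m : E) :
    ∫ z, exp (a * ‖z - m‖) ∂isotropicGaussian E b ≤
      exp (a * ‖m‖ + a ^ 2 / (2 * b)) * 2 ^ ((Module.finrank ℝ E : ℝ) / 2) := by
  have hb2 : b / (b - b / 2) = 2 := by
    field_simp
    ring
  calc _ ≤ ∫ z, exp (a * ‖m‖ + a ^ 2 / (2 * b)) * exp (b / 2 * ‖z‖ ^ 2) ∂isotropicGaussian E b :=
        integral_mono (integrable_exp_mul_norm_sub_isotropicGaussian hb ha m)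
          ((integrable_exp_mul_sq_norm_isotropicGaussian hb (half_lt_self hb)).const_mul _)
          fun z => exp_mul_norm_sub_le ha hb z m
    _ = _ := by
        rw [integral_const_mul,
          integral_exp_mul_sq_norm_isotropicGaussian hb (half_lt_self hb), hb2]

end IsotropicGaussian

section Taylor

variable {E F : Type*} [NormedAddCommGroup E] [NormedSpace ℝ E] [NormedAddCommGroup F]
  [NormedSpace ℝ F]

theorem integral_one_sub_pow (n : ℕ) : ∫ t in (0 : ℝ)..1, (1 - t) ^ n = ((n : ℝ) + 1)⁻¹ := by
  rw [intervalIntegral.integral_comp_sub_left fun t : ℝ => t ^ n]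
  simp

theorem norm_sub_taylor_le [CompleteSpace F] {f : E → F} {n : ℕ} (hf : ContDiff ℝ (n + 1) f)
    {x v : E} {M : ℝ}
    (hM : ∀ t ∈ Set.Icc (0 : ℝ) 1, ‖iteratedFDeriv ℝ (n + 1) f (x + t • v)‖ ≤ M) :
    ‖f (x + v) - ∑ k ∈ Finset.range (n + 1),
        (k.factorial : ℝ)⁻¹ • iteratedFDeriv ℝ k f x fun _ => v‖ ≤
      M * ‖v‖ ^ (n + 1) / (n + 1).factorial := by
  have hint : ∀ᵐ t : ℝ, t ∈ Set.Ioc (0 : ℝ) 1 →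
      ‖(1 - t) ^ n • iteratedFDeriv ℝ (n + 1) f (x + t • v) fun _ => v‖ ≤
        (1 - t) ^ n * (M * ‖v‖ ^ (n + 1)) := .of_forall fun t ht => by
    have h1t : 0 ≤ 1 - t := sub_nonneg.2 ht.2
    rw [norm_smul, norm_pow, norm_of_nonneg h1t]
    gcongr
    calc _ ≤ ‖iteratedFDeriv ℝ (n + 1) f (x + t • v)‖ * ∏ _i : Fin (n + 1), ‖v‖ :=
          ContinuousMultilinearMap.le_opNorm _ _
      _ ≤ M * ‖v‖ ^ (n + 1) := by
          rw [Finset.prod_const, Finset.card_univ, Fintype.card_fin]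
          gcongr
          exact hM t (Set.Ioc_subset_Icc_self ht)
  have hrem := intervalIntegral.norm_integral_le_of_norm_le zero_le_one hint
    (Continuous.intervalIntegrable (by fun_prop) _ _)
  rw [intervalIntegral.integral_mul_const, integral_one_sub_pow] at hrem
  rw [map_add_eq_sum_add_integral_iteratedFDeriv fun t _ => hf.contDiffAt, add_sub_cancel_left,
    norm_smul, norm_inv, norm_of_nonneg (by positivity)]
  calc _ ≤ (n.factorial : ℝ)⁻¹ * (((n : ℝ) + 1)⁻¹ * (M * ‖v‖ ^ (n + 1))) := by gcongr
    _ = _ := by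
      rw [Nat.factorial_succ]
      push_cast
      field_simp

theorem le_mul_exp_of_norm_fderiv_le {U : E → ℝ} (hU : Differentiable ℝ U) (hpos : ∀ x, 0 < U x)
    {C : ℝ} (hC : ∀ x, ‖fderiv ℝ U x‖ ≤ C * U x) (x v : E) :
    U (x + v) ≤ U x * exp (C * ‖v‖) := by
  have hlog : ‖log (U (x + v)) - log (U x)‖ ≤ C * ‖x + v - x‖ :=
    convex_univ.norm_image_sub_le_of_norm_hasFDerivWithin_le (𝕜 := ℝ)
      (fun w _ => ((hU w).hasFDerivAt.log (hpos w).ne').hasFDerivWithinAt)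
      (fun w _ => by
        rw [norm_smul, norm_inv, norm_of_nonneg (hpos w).le, inv_mul_le_iff₀ (hpos w), mul_comm]
        exact hC w) (Set.mem_univ x) (Set.mem_univ _)
  rw [add_sub_cancel_left] at hlog
  rw [← log_le_log_iff (hpos _) (by have := hpos x; positivity),
    log_mul (hpos x).ne' (exp_ne_zero _), log_exp]
  linarith [(le_abs_self _).trans hlog]

end Taylor

section TamePotential

variable {E : Type*} [NormedAddCommGroup E] [NormedSpace ℝ E] {U : E → ℝ} {C : ℝ}

/-- A positive `C³` potential whose derivatives of orders one to three are bounded by `C * U`, which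
is what the expansion of `U` along one step of the chain requires. -/
structure TamePotential (C : ℝ) (U : E → ℝ) : Prop where
  pos : ∀ x, 0 < U x
  contDiff : ContDiff ℝ 3 U
  norm_iteratedFDeriv_le : ∀ k ∈ Finset.Icc 1 3, ∀ x, ‖iteratedFDeriv ℝ k U x‖ ≤ C * U x

namespace TamePotential

theorem nonneg (hU : TamePotential C U) : 0 ≤ C :=
  nonneg_of_mul_nonneg_left
    ((norm_nonneg _).trans (hU.norm_iteratedFDeriv_le 1 (by simp) 0)) (hU.pos 0)

theorem differentiable (hU : TamePotential C U) : Differentiable ℝ U :=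
  hU.contDiff.differentiable (by norm_num)

theorem contDiff_fderiv (hU : TamePotential C U) : ContDiff ℝ 2 (fderiv ℝ U) :=
  hU.contDiff.fderiv_right (by norm_num)

theorem norm_fderiv_le (hU : TamePotential C U) (x : E) : ‖fderiv ℝ U x‖ ≤ C * U x := by
  simpa using hU.norm_iteratedFDeriv_le 1 (by simp) x

theorem norm_fderiv_fderiv_le (hU : TamePotential C U) (x : E) :
    ‖fderiv ℝ (fderiv ℝ U) x‖ ≤ C * U x := by
  rw [← norm_iteratedFDeriv_one, norm_iteratedFDeriv_fderiv]
  exact hU.norm_iteratedFDeriv_le 2 (by simp) x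

theorem norm_iteratedFDeriv_segment_le (hU : TamePotential C U) {k : ℕ} (hk : k ∈ Finset.Icc 1 3)
    (x : E) {v : E} (hv : ‖v‖ ≤ 1) {t : ℝ} (ht : t ∈ Set.Icc (0 : ℝ) 1) :
    ‖iteratedFDeriv ℝ k U (x + t • v)‖ ≤ C * exp C * U x := by
  have hC := hU.nonneg
  have hx := hU.pos x
  have htv : ‖t • v‖ ≤ 1 := by
    rw [norm_smul, norm_of_nonneg ht.1]
    exact mul_le_one₀ ht.2 (norm_nonneg v) hv
  calc ‖iteratedFDeriv ℝ k U (x + t • v)‖ ≤ C * U (x + t • v) :=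
        hU.norm_iteratedFDeriv_le k hk _
    _ ≤ C * (U x * exp (C * ‖t • v‖)) := by
        gcongr
        exact le_mul_exp_of_norm_fderiv_le hU.differentiable hU.pos hU.norm_fderiv_le x _
    _ ≤ C * (U x * exp (C * 1)) := by gcongr
    _ = C * exp C * U x := by ring_nf

theorem abs_sub_le (hU : TamePotential C U) (x : E) {v : E} (hv : ‖v‖ ≤ 1) :
    |U (x + v) - U x| ≤ C * exp C * U x * ‖v‖ := by
  simpa using norm_sub_taylor_le (n := 0) (hU.contDiff.of_le (by norm_num))
    fun t ht => hU.norm_iteratedFDeriv_segment_le (k := 1) (by simp) x hv ht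

theorem abs_sub_sub_fderiv_le (hU : TamePotential C U) (x : E) {v : E} (hv : ‖v‖ ≤ 1) :
    |U (x + v) - U x - fderiv ℝ U x v| ≤ C * exp C * U x * ‖v‖ ^ 2 / 2 := by
  simpa [Finset.sum_range_succ, sub_sub] using
    norm_sub_taylor_le (n := 1) (hU.contDiff.of_le (by norm_num))
      fun t ht => hU.norm_iteratedFDeriv_segment_le (k := 2) (by simp) x hv ht

theorem sq_sub_le (hU : TamePotential C U) (x : E) {v : E} (hv : ‖v‖ ≤ 1) :
    (U (x + v) - U x) ^ 2 ≤
      2 * (‖fderiv ℝ U x‖ ^ 2 * ‖v‖ ^ 2) + (C * exp C * U x) ^ 2 * ‖v‖ ^ 4 / 2 := by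
  have hslope : fderiv ℝ U x v ^ 2 ≤ (‖fderiv ℝ U x‖ * ‖v‖) ^ 2 :=
    sq_le_sq' (abs_le.1 ((fderiv ℝ U x).le_opNorm v)).1 (abs_le.1 ((fderiv ℝ U x).le_opNorm v)).2
  have hremainder : (U (x + v) - U x - fderiv ℝ U x v) ^ 2 ≤
      (C * exp C * U x * ‖v‖ ^ 2 / 2) ^ 2 :=
    sq_le_sq' (abs_le.1 (hU.abs_sub_sub_fderiv_le x hv)).1
      (abs_le.1 (hU.abs_sub_sub_fderiv_le x hv)).2
  linarith [sq_nonneg (U (x + v) - U x - 2 * fderiv ℝ U x v)]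

theorem abs_sub_sub_fderiv_sub_fderiv_fderiv_le (hU : TamePotential C U) (x : E) {v : E}
    (hv : ‖v‖ ≤ 1) :
    |U (x + v) - U x - fderiv ℝ U x v - fderiv ℝ (fderiv ℝ U) x v v / 2| ≤
      C * exp C * U x * ‖v‖ ^ 3 / 6 := by
  simpa [Finset.sum_range_succ, sub_sub, iteratedFDeriv_two_apply, div_eq_inv_mul,
    Nat.factorial] using
    norm_sub_taylor_le (n := 2) (hU.contDiff.of_le (by norm_num))
      fun t ht => hU.norm_iteratedFDeriv_segment_le (k := 3) (by simp) x hv ht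

theorem norm_fderiv_sub_le (hU : TamePotential C U) (x : E) {v : E} (hv : ‖v‖ ≤ 1) :
    ‖fderiv ℝ U (x + v) - fderiv ℝ U x‖ ≤ C * exp C * U x * ‖v‖ := by
  simpa using norm_sub_taylor_le (n := 0) (hU.contDiff_fderiv.of_le (by norm_num)) fun t ht => by
    rw [norm_iteratedFDeriv_fderiv]
    exact hU.norm_iteratedFDeriv_segment_le (k := 2) (by simp) x hv ht

theorem norm_fderiv_sub_sub_fderiv_fderiv_le (hU : TamePotential C U) (x : E) {v : E}
    (hv : ‖v‖ ≤ 1) :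
    ‖fderiv ℝ U (x + v) - fderiv ℝ U x - fderiv ℝ (fderiv ℝ U) x v‖ ≤
      C * exp C * U x * ‖v‖ ^ 2 / 2 := by
  simpa [Finset.sum_range_succ, sub_sub] using
    norm_sub_taylor_le (n := 1) (hU.contDiff_fderiv.of_le (by norm_num)) fun t ht => by
      rw [norm_iteratedFDeriv_fderiv]
      exact hU.norm_iteratedFDeriv_segment_le (k := 3) (by simp) x hv ht

theorem abs_trapezoidal_error_le (hU : TamePotential C U) (x : E) {v : E} (hv : ‖v‖ ≤ 1) :
    |(fderiv ℝ U x v + fderiv ℝ U (x + v) v) / 2 - (U (x + v) - U x)| ≤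
      C * exp C * U x * ‖v‖ ^ 3 / 2 := by
  have hvalue := hU.abs_sub_sub_fderiv_sub_fderiv_fderiv_le x hv
  have hslope := (ContinuousLinearMap.le_opNorm _ v).trans
    (mul_le_mul_of_nonneg_right (hU.norm_fderiv_sub_sub_fderiv_fderiv_le x hv) (norm_nonneg v))
  have := norm_nonneg v
  simp only [sub_apply, norm_eq_abs, abs_le] at hvalue hslope ⊢
  constructor <;> nlinarith

theorem abs_sq_norm_fderiv_sub_le (hU : TamePotential C U) (x : E) {v : E} (hv : ‖v‖ ≤ 1) :
    |‖fderiv ℝ U x‖ ^ 2 - ‖fderiv ℝ U (x + v)‖ ^ 2| ≤ 2 * (C * exp C * U x) ^ 2 * ‖v‖ := by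
  have hx : ‖fderiv ℝ U x‖ ≤ C * exp C * U x := by
    simpa using hU.norm_iteratedFDeriv_segment_le (k := 1) (by simp) x hv (t := 0) (by simp)
  have hy : ‖fderiv ℝ U (x + v)‖ ≤ C * exp C * U x := by
    simpa using hU.norm_iteratedFDeriv_segment_le (k := 1) (by simp) x hv (t := 1) (by simp)
  have hsub : |‖fderiv ℝ U x‖ - ‖fderiv ℝ U (x + v)‖| ≤ C * exp C * U x * ‖v‖ := by
    rw [abs_sub_comm]
    exact (abs_norm_sub_norm_le _ _).trans (hU.norm_fderiv_sub_le x hv)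
  have hnonneg := (norm_nonneg _).trans hx
  calc _ = (‖fderiv ℝ U x‖ + ‖fderiv ℝ U (x + v)‖) * |‖fderiv ℝ U x‖ - ‖fderiv ℝ U (x + v)‖| := by
        rw [sq_sub_sq, abs_mul, abs_of_nonneg (by positivity)]
    _ ≤ (C * exp C * U x + C * exp C * U x) * (C * exp C * U x * ‖v‖) := by gcongr
    _ = _ := by ring

end TamePotential

end TamePotential

section Acceptance

variable {n : ℕ} {β h : ℝ} {U : Euc n → ℝ} {C : ℝ} {x y : Euc n}

theorem norm_gradient (U : Euc n → ℝ) (x : Euc n) : ‖gradient U x‖ = ‖fderiv ℝ U x‖ := by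
  simp [gradient]

theorem inner_gradient (U : Euc n → ℝ) (x v : Euc n) :
    inner ℝ (gradient U x) v = fderiv ℝ U x v := by
  simp [gradient]

/-- The logarithm of the Metropolis–Hastings ratio of the forward Euler proposal, written as `β`
times the error of the trapezoidal rule for `U y - U x`, plus a term of order `h`. -/
def logAcceptRatio (β h : ℝ) (U : Euc n → ℝ) (x y : Euc n) : ℝ :=
  β * ((fderiv ℝ U x (y - x) + fderiv ℝ U y (y - x)) / 2 - (U y - U x)) +
    β * h / 4 * (‖fderiv ℝ U x‖ ^ 2 - ‖fderiv ℝ U y‖ ^ 2)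

theorem sq_norm_add_smul_gradient (h : ℝ) (U : Euc n → ℝ) (x v : Euc n) :
    ‖v + h • gradient U x‖ ^ 2 =
      ‖v‖ ^ 2 + 2 * h * fderiv ℝ U x v + h ^ 2 * ‖fderiv ℝ U x‖ ^ 2 := by
  rw [norm_add_sq_real, inner_smul_right, norm_smul, norm_gradient, real_inner_comm,
    inner_gradient, mul_pow, norm_eq_abs, sq_abs]
  ring

theorem accept_eq_min_one_exp (hβ : 0 < β) (hh : 0 < h) (U : Euc n → ℝ) (x y : Euc n) :
    accept n β h U x y = min 1 (exp (logAcceptRatio β h U x y)) := by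
  have hc : 0 < (4 * π * β⁻¹ * h) ^ (-(n : ℝ) / 2) := by positivity
  rw [accept, eulerDensity, eulerDensity, mul_assoc (_ ^ _), mul_assoc (_ ^ _),
    mul_div_mul_left _ _ hc.ne', ← exp_add, ← exp_add, ← exp_sub, sq_norm_add_smul_gradient,
    sq_norm_add_smul_gradient, norm_sub_rev x, ← neg_sub y x, map_neg, logAcceptRatio]
  congr 2
  field_simp
  ring

theorem accept_nonneg (hβ : 0 < β) (hh : 0 < h) (U : Euc n → ℝ) (x y : Euc n) :
    0 ≤ accept n β h U x y := by
  rw [accept_eq_min_one_exp hβ hh]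
  positivity

theorem accept_le_one (n : ℕ) (β h : ℝ) (U : Euc n → ℝ) (x y : Euc n) : accept n β h U x y ≤ 1 :=
  min_le_left _ _

theorem one_sub_accept_le_abs_logAcceptRatio (hβ : 0 < β) (hh : 0 < h) (U : Euc n → ℝ)
    (x y : Euc n) : 1 - accept n β h U x y ≤ |logAcceptRatio β h U x y| := by
  rw [accept_eq_min_one_exp hβ hh, sub_le_comm, le_min_iff]
  have := add_one_le_exp (logAcceptRatio β h U x y)
  constructor <;>
    linarith [abs_nonneg (logAcceptRatio β h U x y), neg_abs_le (logAcceptRatio β h U x y)]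

theorem TamePotential.one_sub_accept_le (hU : TamePotential C U) (hβ : 0 < β) (hh : 0 < h)
    (hxy : ‖y - x‖ ≤ 1) :
    1 - accept n β h U x y ≤
      β / 2 * (C * exp C * U x * ‖y - x‖ ^ 3 + h * (C * exp C * U x) ^ 2 * ‖y - x‖) := by
  calc 1 - accept n β h U x y ≤ |logAcceptRatio β h U x y| :=
        one_sub_accept_le_abs_logAcceptRatio hβ hh U x y
    _ ≤ β * |(fderiv ℝ U x (y - x) + fderiv ℝ U y (y - x)) / 2 - (U y - U x)| +
        β * h / 4 * |‖fderiv ℝ U x‖ ^ 2 - ‖fderiv ℝ U y‖ ^ 2| := by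
        refine (abs_add_le _ _).trans_eq ?_
        rw [abs_mul, abs_mul, abs_of_pos hβ, abs_of_pos (by positivity : 0 < β * h / 4)]
    _ ≤ β * (C * exp C * U x * ‖y - x‖ ^ 3 / 2) +
        β * h / 4 * (2 * (C * exp C * U x) ^ 2 * ‖y - x‖) := by
        gcongr
        · simpa using hU.abs_trapezoidal_error_le x hxy
        · simpa using hU.abs_sq_norm_fderiv_sub_le x hxy
    _ = _ := by ring

end Acceptance

section PointwiseIncrement

variable {n : ℕ} {β h s θ C L Estar : ℝ} {U : Euc n → ℝ} {x y : Euc n}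

theorem mem_Rset_pow_four (hs : 0 < s) : x ∈ Rset n (s ^ 4) 1 U ↔ U x < 1 / s := by
  have hpow : (s ^ 4) ^ (-(1 : ℝ) / 4) = 1 / s := by
    rw [← rpow_natCast, ← rpow_mul hs.le, one_div, ← rpow_neg_one]
    norm_num
  rw [Rset, Set.mem_ofPred_eq, one_mul, hpow]

theorem acceptBar_nonneg (hβ : 0 < β) (hh : 0 < h) (Estar : ℝ) (U : Euc n → ℝ) (x y : Euc n) :
    0 ≤ acceptBar n β h Estar U x y := by
  rw [acceptBar]
  split_ifs
  exacts [accept_nonneg hβ hh U x y, le_rfl]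

theorem acceptBar_le_one (n : ℕ) (β h Estar : ℝ) (U : Euc n → ℝ) (x y : Euc n) :
    acceptBar n β h Estar U x y ≤ 1 := by
  rw [acceptBar]
  split_ifs
  exacts [accept_le_one n β h U x y, zero_le_one]

/-- Rejecting a proposal that leaves the level set can only help: it forgoes an increase. -/
theorem acceptBar_mul_exp_sub_one_le_add_rejection (hθ : 0 ≤ θ) (hx : x ∈ Rset n h Estar U) :
    acceptBar n β h Estar U x y * (exp (θ * (U y - U x)) - 1) ≤
      exp (θ * (U y - U x)) - 1 +
        (1 - accept n β h U x y) * |exp (θ * (U y - U x)) - 1| := by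
  have haccept := sub_nonneg.2 (accept_le_one n β h U x y)
  rw [acceptBar]
  split_ifs with hxy
  · nlinarith [neg_abs_le (exp (θ * (U y - U x)) - 1)]
  · have hy : U x ≤ U y := hx.le.trans (not_lt.1 fun hy => hxy ⟨hx, hy⟩)
    have : 1 ≤ exp (θ * (U y - U x)) := one_le_exp (mul_nonneg hθ (sub_nonneg.2 hy))
    rw [zero_mul]
    exact add_nonneg (sub_nonneg.2 this) (mul_nonneg haccept (abs_nonneg _))

theorem TamePotential.acceptBar_mul_exp_sub_one_le_taylor (hU : TamePotential C U)
    (hβ : 0 < β) (hh : 0 < h) (hθ : 0 ≤ θ) (hx : x ∈ Rset n h Estar U) (hxy : ‖y - x‖ ≤ 1)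
    (hsmall : θ * (C * exp C * U x) * ‖y - x‖ ≤ 1) :
    acceptBar n β h Estar U x y * (exp (θ * (U y - U x)) - 1) ≤
      θ * (fderiv ℝ U x (y - x) + fderiv ℝ (fderiv ℝ U) x (y - x) (y - x) / 2) +
        2 * θ ^ 2 * ‖fderiv ℝ U x‖ ^ 2 * ‖y - x‖ ^ 2 + θ * (C * exp C * U x) * ‖y - x‖ ^ 3 +
        θ * β * (C * exp C * U x) ^ 2 * ‖y - x‖ ^ 2 *
          (‖y - x‖ ^ 2 + h * (C * exp C * U x)) := by
  have hzero := hU.abs_sub_le x hxy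
  have hsq := hU.sq_sub_le x hxy
  have htwo := hU.abs_sub_sub_fderiv_sub_fderiv_fderiv_le x hxy
  have hreject := hU.one_sub_accept_le hβ hh hxy
  have hM : 0 ≤ C * exp C * U x := mul_nonneg (mul_nonneg hU.nonneg (exp_nonneg _)) (hU.pos x).le
  rw [add_sub_cancel] at hzero hsq htwo
  have hr := norm_nonneg (y - x)
  set r := ‖y - x‖
  set M := C * exp C * U x
  set Δ := U y - U x
  have hΔ : |θ * Δ| ≤ θ * (M * r) := by
    rw [abs_mul, abs_of_nonneg hθ]
    gcongr
  have hΔ1 : |θ * Δ| ≤ 1 := by linarith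
  have hexp : exp (θ * Δ) - 1 ≤ θ * Δ + θ ^ 2 * Δ ^ 2 := by
    have := (abs_le.1 (abs_exp_sub_one_sub_id_le hΔ1)).2
    linarith [mul_pow θ Δ 2]
  have hfirst : θ * Δ ≤ θ * (fderiv ℝ U x (y - x) +
      fderiv ℝ (fderiv ℝ U) x (y - x) (y - x) / 2 + M * r ^ 3 / 6) := by
    gcongr
    linarith [(abs_le.1 htwo).2]
  have hcubic : 0 ≤ θ * M * r ^ 3 := by positivity
  have hsecond : θ ^ 2 * Δ ^ 2 ≤ 2 * θ ^ 2 * ‖fderiv ℝ U x‖ ^ 2 * r ^ 2 + θ * M * r ^ 3 / 2 :=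
    calc _ ≤ θ ^ 2 * (2 * (‖fderiv ℝ U x‖ ^ 2 * r ^ 2) + M ^ 2 * r ^ 4 / 2) := by gcongr
      _ = 2 * θ ^ 2 * ‖fderiv ℝ U x‖ ^ 2 * r ^ 2 + θ * M * r * (θ * M * r ^ 3) / 2 := by ring
      _ ≤ 2 * θ ^ 2 * ‖fderiv ℝ U x‖ ^ 2 * r ^ 2 + 1 * (θ * M * r ^ 3) / 2 := by
        gcongr
      _ = _ := by ring
  have hcross : (1 - accept n β h U x y) * |exp (θ * Δ) - 1| ≤
      β / 2 * (M * r ^ 3 + h * M ^ 2 * r) * (2 * (θ * (M * r))) := by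
    gcongr
    exact (abs_exp_sub_one_le hΔ1).trans (by linarith)
  linarith [acceptBar_mul_exp_sub_one_le_add_rejection (β := β) (y := y) hθ hx]

theorem pow_le_factorial_mul_exp {r : ℝ} (hr : 0 ≤ r) (k : ℕ) : r ^ k ≤ k.factorial * exp r := by
  rw [← div_le_iff₀' (by positivity)]
  exact pow_div_factorial_le_exp r hr k

/-- In the diffusive scaling `r = s ^ 2 * ρ` every term of the Taylor remainder is of order `s ^ 5`,
a power of `s` smaller than the time step `s ^ 4`. -/
theorem taylor_remainder_le {M ρ : ℝ} (hβ : 0 < β) (hs : 0 < s) (hs1 : s ≤ 1)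
    (hM : 0 ≤ M) (hML : M * s ≤ L) (hθM : θ * (M * s) ≤ 1) (hρ : 0 ≤ ρ) :
    θ * M * (s ^ 2 * ρ) ^ 3 +
        θ * β * M ^ 2 * (s ^ 2 * ρ) ^ 2 * ((s ^ 2 * ρ) ^ 2 + s ^ 4 * M) ≤
      (6 + β * (24 * L + 2 * L ^ 2)) * s ^ 5 * exp ρ := by
  have hMs : 0 ≤ M * s := by positivity
  have hL : 0 ≤ L := hMs.trans hML
  calc _ = θ * (M * s) * (s ^ 5 * ρ ^ 3) + θ * (M * s) * (β * s ^ 5 *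
        (s * (M * s) * ρ ^ 4 + (M * s) ^ 2 * ρ ^ 2)) := by ring
    _ ≤ 1 * (s ^ 5 * ρ ^ 3) + 1 * (β * s ^ 5 * (1 * L * ρ ^ 4 + L ^ 2 * ρ ^ 2)) := by gcongr
    _ ≤ 1 * (s ^ 5 * (Nat.factorial 3 * exp ρ)) + 1 * (β * s ^ 5 *
        (1 * L * (Nat.factorial 4 * exp ρ) + L ^ 2 * (Nat.factorial 2 * exp ρ))) := by
        gcongr <;> exact pow_le_factorial_mul_exp hρ _
    _ = _ := by
        simp only [Nat.factorial]
        push_cast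
        ring

theorem mul_pow_le_of_one_le_mul {ρ : ℝ} (hs : 0 < s) (hsρ : 1 ≤ s * ρ) {k : ℕ} (hk : k ≤ 5) :
    (s * ρ) ^ k ≤ 120 * s ^ 5 * exp ρ := by
  have hρ : 0 ≤ ρ := (pos_of_mul_pos_right (one_pos.trans_le hsρ) hs.le).le
  calc (s * ρ) ^ k ≤ (s * ρ) ^ 5 := pow_le_pow_right₀ hsρ hk
    _ = s ^ 5 * ρ ^ 5 := by ring
    _ ≤ s ^ 5 * (Nat.factorial 5 * exp ρ) := by
      gcongr
      exact pow_le_factorial_mul_exp hρ 5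
    _ = 120 * s ^ 5 * exp ρ := by
      simp only [Nat.factorial]
      push_cast
      ring

theorem acceptBar_mul_exp_sub_one_le_exp (hβ : 0 < β) (hU : ∀ x, 0 < U x) (hs : 0 < s)
    (hθ : 0 ≤ θ) (hθ1 : θ ≤ 1) (x y : Euc n) :
    acceptBar n β (s ^ 4) 1 U x y * (exp (θ * (U y - U x)) - 1) ≤ exp (1 / s) := by
  by_cases hy : y ∈ Rset n (s ^ 4) 1 U
  · have hle : θ * (U y - U x) ≤ 1 * (1 / s) := by
      have hsub : U y - U x ≤ 1 / s := by linarith [(mem_Rset_pow_four hs).1 hy, hU x]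
      have : 0 ≤ 1 / s := by positivity
      exact (mul_le_mul_of_nonneg_left hsub hθ).trans (by gcongr)
    have h0 := acceptBar_nonneg hβ (pow_pos hs 4) 1 U x y
    have h1 := acceptBar_le_one n β (s ^ 4) 1 U x y
    calc _ ≤ 1 * exp (θ * (U y - U x)) := by
          nlinarith [exp_nonneg (θ * (U y - U x))]
      _ ≤ exp (1 / s) := by simpa using hle
  · rw [acceptBar, if_neg fun h => hy h.2, zero_mul]
    positivity

theorem TamePotential.neg_le_mul_fderiv_add_fderiv_fderiv (hU : TamePotential C U) (hs : 0 < s)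
    (hs1 : s ≤ 1) (hθ : 0 ≤ θ) (hθC : θ * C ≤ 1) (hx : x ∈ Rset n (s ^ 4) 1 U) {v : Euc n} {ρ : ℝ}
    (hv : ‖v‖ = s ^ 2 * ρ) :
    -(s * ρ + (s * ρ) ^ 2 / 2) ≤
      θ * (fderiv ℝ U x v + fderiv ℝ (fderiv ℝ U) x v v / 2) := by
  have hρ : 0 ≤ ρ := nonneg_of_mul_nonneg_right (hv ▸ norm_nonneg v) (by positivity)
  have hθCU : θ * C * (U x * s) ≤ 1 * 1 := by
    have := hU.pos x
    have := (lt_div_iff₀ hs).1 ((mem_Rset_pow_four hs).1 hx)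
    gcongr
  have hlinear : |θ * fderiv ℝ U x v| ≤ s * ρ :=
    calc _ = θ * |fderiv ℝ U x v| := by rw [abs_mul, abs_of_nonneg hθ]
      _ ≤ θ * (C * U x * (s ^ 2 * ρ)) := by
        gcongr
        exact hv ▸ (fderiv ℝ U x).le_of_opNorm_le (hU.norm_fderiv_le x) v
      _ = θ * C * (U x * s) * (s * ρ) := by ring
      _ ≤ 1 * 1 * (s * ρ) := by gcongr
      _ = _ := by ring
  have hquadratic : |θ * fderiv ℝ (fderiv ℝ U) x v v| ≤ (s * ρ) ^ 2 :=
    calc _ = θ * |fderiv ℝ (fderiv ℝ U) x v v| := by rw [abs_mul, abs_of_nonneg hθ]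
      _ ≤ θ * (C * U x * (s ^ 2 * ρ) * (s ^ 2 * ρ)) := by
        gcongr
        exact hv ▸ (fderiv ℝ (fderiv ℝ U) x).le_of_opNorm₂_le_of_le
          (hU.norm_fderiv_fderiv_le x) le_rfl le_rfl
      _ = θ * C * (U x * s) * s * (s * ρ) ^ 2 := by ring
      _ ≤ 1 * 1 * 1 * (s * ρ) ^ 2 := by gcongr
      _ = _ := by ring
  linarith [(abs_le.1 hlinear).1, (abs_le.1 hquadratic).1]

theorem TamePotential.acceptBar_mul_exp_sub_one_le_of_le_norm (hU : TamePotential C U)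
    (hβ : 0 < β) (hs : 0 < s) (hs1 : s ≤ 1) (hθ : 0 ≤ θ) (hθ1 : θ ≤ 1) (hθC : θ * C ≤ 1)
    (hx : x ∈ Rset n (s ^ 4) 1 U) {ρ : ℝ} (hρ : ‖y - x‖ = s ^ 2 * ρ) (hfar : s ≤ ‖y - x‖) :
    acceptBar n β (s ^ 4) 1 U x y * (exp (θ * (U y - U x)) - 1) ≤
      θ * (fderiv ℝ U x (y - x) + fderiv ℝ (fderiv ℝ U) x (y - x) (y - x) / 2) +
        300 * s ^ 5 * exp (2 * ρ) := by
  have hsρ : 1 ≤ s * ρ := by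
    rw [← mul_le_mul_iff_of_pos_left hs]
    linarith [hfar.trans_eq hρ]
  have hρ0 : 0 ≤ ρ := (pos_of_mul_pos_right (one_pos.trans_le hsρ) hs.le).le
  have hincrement : acceptBar n β (s ^ 4) 1 U x y * (exp (θ * (U y - U x)) - 1) ≤
      120 * s ^ 5 * exp (2 * ρ) :=
    calc _ ≤ exp (1 / s) := acceptBar_mul_exp_sub_one_le_exp hβ hU.pos hs hθ hθ1 x y
      _ ≤ (s * ρ) ^ 0 * exp ρ := by
        rw [pow_zero, one_mul, exp_le_exp, div_le_iff₀' hs]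
        exact hsρ
      _ ≤ 120 * s ^ 5 * exp ρ * exp ρ := by
        gcongr
        exact mul_pow_le_of_one_le_mul hs hsρ (by norm_num)
      _ = 120 * s ^ 5 * exp (2 * ρ) := by rw [two_mul, exp_add, mul_assoc]
  have hpow (k : ℕ) (hk : k ≤ 5) : (s * ρ) ^ k ≤ 120 * s ^ 5 * exp (2 * ρ) :=
    (mul_pow_le_of_one_le_mul hs hsρ hk).trans (by gcongr; linarith)
  linarith [hpow 1 (by simp), hpow 2 (by simp), pow_one (s * ρ),
    hU.neg_le_mul_fderiv_add_fderiv_fderiv hs hs1 hθ hθC hx hρ]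

theorem TamePotential.acceptBar_mul_exp_sub_one_le_of_norm_le (hU : TamePotential C U)
    (hβ : 0 < β) (hs : 0 < s) (hs1 : s ≤ 1) (hθ : 0 ≤ θ) (hL : C * exp C ≤ L)
    (hθL : θ * L ≤ 1) (hx : x ∈ Rset n (s ^ 4) 1 U) {ρ : ℝ} (hρ : ‖y - x‖ = s ^ 2 * ρ)
    (hnear : ‖y - x‖ ≤ s) :
    acceptBar n β (s ^ 4) 1 U x y * (exp (θ * (U y - U x)) - 1) ≤
      θ * (fderiv ℝ U x (y - x) + fderiv ℝ (fderiv ℝ U) x (y - x) (y - x) / 2) +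
        2 * θ ^ 2 * ‖fderiv ℝ U x‖ ^ 2 * ‖y - x‖ ^ 2 +
        (6 + β * (24 * L + 2 * L ^ 2)) * s ^ 5 * exp ρ := by
  have hpos := hU.pos x
  have hM : 0 ≤ C * exp C * U x := mul_nonneg (mul_nonneg hU.nonneg (exp_nonneg _)) hpos.le
  have hUx := (lt_div_iff₀ hs).1 ((mem_Rset_pow_four hs).1 hx)
  have hML : C * exp C * U x * s ≤ L :=
    calc _ = C * exp C * (U x * s) := by ring
      _ ≤ L * 1 := by
        have : 0 ≤ C * exp C := mul_nonneg hU.nonneg (exp_nonneg _)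
        gcongr
        exact this.trans hL
      _ = L := mul_one L
  have hθM : θ * (C * exp C * U x * s) ≤ 1 := (mul_le_mul_of_nonneg_left hML hθ).trans hθL
  have hsmall : θ * (C * exp C * U x) * ‖y - x‖ ≤ 1 :=
    calc _ ≤ θ * (C * exp C * U x) * s := by gcongr
      _ = θ * (C * exp C * U x * s) := by ring
      _ ≤ 1 := hθM
  have hρ0 : 0 ≤ ρ := nonneg_of_mul_nonneg_right (hρ ▸ norm_nonneg (y - x)) (by positivity)
  have hremainder := taylor_remainder_le hβ hs hs1 hM hML hθM hρ0
  rw [← hρ] at hremainder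
  linarith [hU.acceptBar_mul_exp_sub_one_le_taylor hβ (pow_pos hs 4) hθ hx (hnear.trans hs1) hsmall]

theorem TamePotential.acceptBar_mul_exp_sub_one_le (hU : TamePotential C U) (hβ : 0 < β)
    (hs : 0 < s) (hs1 : s ≤ 1) (hθ : 0 ≤ θ) (hθ1 : θ ≤ 1) (hL : C * exp C ≤ L) (hθL : θ * L ≤ 1)
    (hx : x ∈ Rset n (s ^ 4) 1 U) (y : Euc n) :
    acceptBar n β (s ^ 4) 1 U x y * (exp (θ * (U y - U x)) - 1) ≤
      θ * (fderiv ℝ U x (y - x) + fderiv ℝ (fderiv ℝ U) x (y - x) (y - x) / 2) +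
        2 * θ ^ 2 * ‖fderiv ℝ U x‖ ^ 2 * ‖y - x‖ ^ 2 +
        (300 + β * (24 * L + 2 * L ^ 2)) * s ^ 5 * exp (2 / s ^ 2 * ‖y - x‖) := by
  have hC := hU.nonneg
  have hCL : C ≤ L := (le_mul_of_one_le_right hC (one_le_exp hC)).trans hL
  have hL0 : 0 ≤ L := hC.trans hCL
  obtain ⟨ρ, hρ⟩ : ∃ ρ, ‖y - x‖ = s ^ 2 * ρ := ⟨‖y - x‖ / s ^ 2, by field_simp⟩
  have hρ0 : 0 ≤ ρ := nonneg_of_mul_nonneg_right (hρ ▸ norm_nonneg (y - x)) (by positivity)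
  have hexponent : 2 / s ^ 2 * ‖y - x‖ = 2 * ρ := by
    rw [hρ]
    field_simp
  rw [hexponent]
  rcases le_total ‖y - x‖ s with hnear | hfar
  · have hmono : (6 + β * (24 * L + 2 * L ^ 2)) * s ^ 5 * exp ρ ≤
        (300 + β * (24 * L + 2 * L ^ 2)) * s ^ 5 * exp (2 * ρ) := by
      gcongr <;> linarith
    linarith [hU.acceptBar_mul_exp_sub_one_le_of_norm_le hβ hs hs1 hθ hL hθL hx hρ hnear]
  · have hθC : θ * C ≤ 1 := (mul_le_mul_of_nonneg_left hCL hθ).trans hθL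
    have hextra : 0 ≤ 2 * θ ^ 2 * ‖fderiv ℝ U x‖ ^ 2 * ‖y - x‖ ^ 2 +
        β * (24 * L + 2 * L ^ 2) * s ^ 5 * exp (2 * ρ) := by positivity
    linarith [hU.acceptBar_mul_exp_sub_one_le_of_le_norm hβ hs hs1 hθ hθ1 hθC hx hρ hfar]

end PointwiseIncrement

section EulerKernel

variable {n : ℕ} {β h : ℝ}

theorem measurableEmbedding_add_sub {G : Type*} [AddGroup G] [MeasurableSpace G] [MeasurableAdd G]
    [MeasurableSub G] (a b : G) : MeasurableEmbedding fun g => a + (g - b) :=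
  (measurableEmbedding_addLeft a).comp (MeasurableEquiv.subRight b).measurableEmbedding

theorem eulerKernel_eq_map (hβ : 0 < β) (hh : 0 < h) (U : Euc n → ℝ) (x : Euc n) :
    eulerKernel n β h U x = (isotropicGaussian (Euc n) (β / (4 * h))).map
      fun z => x + (z - h • gradient U x) := by
  have hvar : 4 * π * β⁻¹ * h = π / (β / (4 * h)) := by field_simp
  have hpres : MeasurePreserving (fun z => x + (z - h • gradient U x)) volume volume :=
    (measurePreserving_add_left volume x).comp (measurePreserving_sub_right volume _)
  ext A hA
  rw [(measurableEmbedding_add_sub _ _).map_apply, eulerKernel, isotropicGaussian,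
    withDensity_apply _ hA, withDensity_apply _ (hpres.measurable hA),
    ← hpres.setLIntegral_comp_preimage_emb (measurableEmbedding_add_sub _ _)]
  refine lintegral_congr fun z => ?_
  rw [eulerDensity, hvar, finrank_euclideanSpace_fin]
  congr 3
  field_simp
  simp

theorem isProbabilityMeasure_eulerKernel (hβ : 0 < β) (hh : 0 < h) (U : Euc n → ℝ) (x : Euc n) :
    IsProbabilityMeasure (eulerKernel n β h U x) := by
  have := isProbabilityMeasure_isotropicGaussian (E := Euc n) (b := β / (4 * h)) (by positivity)
  rw [eulerKernel_eq_map hβ hh]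
  exact Measure.isProbabilityMeasure_map (by fun_prop)

theorem integral_sub_eulerKernel (hβ : 0 < β) (hh : 0 < h) (U : Euc n → ℝ) (x : Euc n)
    (f : Euc n → ℝ) :
    ∫ y, f (y - x) ∂eulerKernel n β h U x =
      ∫ z, f (z - h • gradient U x) ∂isotropicGaussian (Euc n) (β / (4 * h)) := by
  rw [eulerKernel_eq_map hβ hh, (measurableEmbedding_add_sub _ _).integral_map]
  simp only [add_sub_cancel_left]

theorem integrable_sub_eulerKernel (hβ : 0 < β) (hh : 0 < h) (U : Euc n → ℝ) (x : Euc n)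
    {f : Euc n → ℝ} (hf : Integrable (fun z => f (z - h • gradient U x))
      (isotropicGaussian (Euc n) (β / (4 * h)))) :
    Integrable (fun y => f (y - x)) (eulerKernel n β h U x) := by
  rw [eulerKernel_eq_map hβ hh, (measurableEmbedding_add_sub _ _).integrable_map_iff]
  simpa only [Function.comp_def, add_sub_cancel_left] using hf

theorem integrable_clm_sub_eulerKernel (hβ : 0 < β) (hh : 0 < h) (U : Euc n → ℝ) (x : Euc n)
    (l : Euc n →L[ℝ] ℝ) : Integrable (fun y => l (y - x)) (eulerKernel n β h U x) :=
  integrable_sub_eulerKernel hβ hh U x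
    (integrable_clm_sub_isotropicGaussian (by positivity) l _)

theorem integral_clm_sub_eulerKernel (hβ : 0 < β) (hh : 0 < h) (U : Euc n → ℝ) (x : Euc n)
    (l : Euc n →L[ℝ] ℝ) : ∫ y, l (y - x) ∂eulerKernel n β h U x = -(h * l (gradient U x)) := by
  rw [integral_sub_eulerKernel hβ hh, integral_clm_sub_isotropicGaussian (by positivity)]
  simp

theorem integrable_bilin_sub_eulerKernel (hβ : 0 < β) (hh : 0 < h) (U : Euc n → ℝ) (x : Euc n)
    (A : Euc n →L[ℝ] Euc n →L[ℝ] ℝ) :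
    Integrable (fun y => A (y - x) (y - x)) (eulerKernel n β h U x) :=
  integrable_sub_eulerKernel hβ hh U x (f := fun v => A v v)
    (integrable_bilin_sub_isotropicGaussian (by positivity) A _)

theorem integral_bilin_sub_eulerKernel (hβ : 0 < β) (hh : 0 < h) (U : Euc n → ℝ) (x : Euc n)
    (A : Euc n →L[ℝ] Euc n →L[ℝ] ℝ) :
    ∫ y, A (y - x) (y - x) ∂eulerKernel n β h U x =
      2 * h / β * ∑ i, A (EuclideanSpace.single i 1) (EuclideanSpace.single i 1) +
        h ^ 2 * A (gradient U x) (gradient U x) := by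
  rw [integral_sub_eulerKernel hβ hh U x fun v => A v v,
    integral_bilin_sub_isotropicGaussian (by positivity) (EuclideanSpace.basisFun (Fin n) ℝ)]
  simp
  field_simp
  ring

theorem integrable_sq_norm_sub_eulerKernel (hβ : 0 < β) (hh : 0 < h) (U : Euc n → ℝ) (x : Euc n) :
    Integrable (fun y => ‖y - x‖ ^ 2) (eulerKernel n β h U x) :=
  integrable_sub_eulerKernel hβ hh U x (f := fun v => ‖v‖ ^ 2)
    (integrable_sq_norm_sub_isotropicGaussian (by positivity) _)

theorem integral_sq_norm_sub_eulerKernel (hβ : 0 < β) (hh : 0 < h) (U : Euc n → ℝ) (x : Euc n) :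
    ∫ y, ‖y - x‖ ^ 2 ∂eulerKernel n β h U x =
      2 * h * n / β + h ^ 2 * ‖gradient U x‖ ^ 2 := by
  rw [integral_sub_eulerKernel hβ hh U x fun v => ‖v‖ ^ 2,
    integral_sq_norm_sub_isotropicGaussian (by positivity), finrank_euclideanSpace_fin, norm_smul,
    mul_pow, norm_eq_abs, sq_abs]
  field_simp
  ring

theorem integrable_exp_mul_norm_sub_eulerKernel (hβ : 0 < β) (hh : 0 < h) (U : Euc n → ℝ)
    (x : Euc n) {a : ℝ} (ha : 0 ≤ a) :
    Integrable (fun y => exp (a * ‖y - x‖)) (eulerKernel n β h U x) :=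
  integrable_sub_eulerKernel hβ hh U x (f := fun v => exp (a * ‖v‖))
    (integrable_exp_mul_norm_sub_isotropicGaussian (by positivity) ha _)

theorem integral_exp_mul_norm_sub_eulerKernel_le (hβ : 0 < β) (hh : 0 < h) (U : Euc n → ℝ)
    (x : Euc n) {a : ℝ} (ha : 0 ≤ a) :
    ∫ y, exp (a * ‖y - x‖) ∂eulerKernel n β h U x ≤
      exp (a * (h * ‖gradient U x‖) + 2 * a ^ 2 * h / β) * 2 ^ ((n : ℝ) / 2) := by
  have hvar : 2 * a ^ 2 * h / β = a ^ 2 / (2 * (β / (4 * h))) := by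
    field_simp
    ring
  rw [integral_sub_eulerKernel hβ hh U x fun v => exp (a * ‖v‖), hvar]
  simpa [norm_smul, abs_of_pos hh] using
    integral_exp_mul_norm_sub_isotropicGaussian_le (E := Euc n) (b := β / (4 * h)) (by positivity)
      ha (h • gradient U x)

end EulerKernel

section PatchedKernel

variable {n : ℕ} {β h Estar θ s C L : ℝ} {U : Euc n → ℝ} {x : Euc n}

theorem measurableSet_Rset (hU : Measurable U) (h Estar : ℝ) : MeasurableSet (Rset n h Estar U) :=
  measurableSet_lt hU measurable_const

theorem measurable_acceptBar (hU : Measurable U) (β h Estar : ℝ) (x : Euc n) :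
    Measurable (acceptBar n β h Estar U x) := by
  have hgrad : Measurable (gradient U) :=
    (InnerProductSpace.toDual ℝ (Euc n)).symm.continuous.measurable.comp (measurable_fderiv ℝ U)
  have hR := measurableSet_Rset hU h Estar
  unfold acceptBar accept eulerDensity
  refine Measurable.ite ((MeasurableSet.const _).inter hR) ?_ measurable_const
  fun_prop

theorem integrable_acceptBar_mul_exp (hβ : 0 < β) (hh : 0 < h) (hU : Measurable U) (hθ : 0 ≤ θ)
    (Estar : ℝ) (x : Euc n) :
    Integrable (fun y => acceptBar n β h Estar U x y * exp (θ * U y)) (eulerKernel n β h U x) := by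
  have := isProbabilityMeasure_eulerKernel hβ hh U x
  have hmeas := (measurable_acceptBar hU β h Estar x).mul (hU.const_mul θ).exp
  refine .of_bound hmeas.aestronglyMeasurable (exp (θ * (Estar * h ^ (-(1 : ℝ) / 4)))) ?_
  refine .of_forall fun y => ?_
  rw [norm_of_nonneg (mul_nonneg (acceptBar_nonneg hβ hh Estar U x y) (exp_nonneg _))]
  by_cases hy : y ∈ Rset n h Estar U
  · have hUy : U y ≤ Estar * h ^ (-(1 : ℝ) / 4) := hy.le
    calc _ ≤ 1 * exp (θ * (Estar * h ^ (-(1 : ℝ) / 4))) := by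
          gcongr
          exact acceptBar_le_one n β h Estar U x y
      _ = _ := one_mul _
  · rw [acceptBar, if_neg fun hxy => hy hxy.2, zero_mul]
    exact exp_nonneg _

theorem integrable_acceptBar_mul_exp_sub_one (hβ : 0 < β) (hh : 0 < h) (hU : Measurable U)
    (hθ : 0 ≤ θ) (Estar : ℝ) (x : Euc n) :
    Integrable (fun y => acceptBar n β h Estar U x y * (exp (θ * (U y - U x)) - 1))
      (eulerKernel n β h U x) := by
  have hacc := integrable_acceptBar_mul_exp hβ hh hU le_rfl Estar x
  have hexp := integrable_acceptBar_mul_exp hβ hh hU hθ Estar x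
  refine ((hexp.mul_const (exp (-(θ * U x)))).sub hacc).congr (.of_forall fun y => ?_)
  simp only [Pi.sub_apply, mul_assoc, ← exp_add, zero_mul, exp_zero]
  ring_nf

theorem patchedKernel_eq_withDensity_eulerKernel (hβ : 0 < β) (hh : 0 < h) (hU : Measurable U)
    (Estar : ℝ) (x : Euc n) :
    patchedKernel n β h Estar U x =
      (eulerKernel n β h U x).withDensity
        (fun y => ENNReal.ofReal (acceptBar n β h Estar U x y)) +
      (1 - ∫⁻ y, ENNReal.ofReal (acceptBar n β h Estar U x y) ∂eulerKernel n β h U x) •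
        Measure.dirac x := by
  have hacc := (measurable_acceptBar hU β h Estar x).ennreal_ofReal
  have hdens : Measurable fun y => ENNReal.ofReal (eulerDensity n β h U x y) := by
    unfold eulerDensity
    fun_prop
  have hmul (y : Euc n) : ENNReal.ofReal (acceptBar n β h Estar U x y * eulerDensity n β h U x y) =
      ENNReal.ofReal (eulerDensity n β h U x y) * ENNReal.ofReal (acceptBar n β h Estar U x y) := by
    rw [ENNReal.ofReal_mul (acceptBar_nonneg hβ hh Estar U x y), mul_comm]
  rw [patchedKernel, eulerKernel, lintegral_withDensity_eq_lintegral_mul _ hdens hacc,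
    ← withDensity_mul _ hdens hacc]
  simp only [hmul, Pi.mul_def]

/-- The mean, after a Metropolis step from `x`, of a function equal to `c` at `x` and to `φ` at the
proposals. -/
theorem lintegral_ofReal_mul_add_one_sub_lintegral_mul {α : Type*} [MeasurableSpace α]
    {μ : Measure α} [IsProbabilityMeasure μ] {a φ : α → ℝ} {c : ℝ} (ham : Measurable a)
    (ha0 : ∀ y, 0 ≤ a y) (ha1 : ∀ y, a y ≤ 1) (hφ : ∀ y, 0 ≤ φ y)
    (hint : Integrable (fun y => a y * φ y) μ) (hc : 0 ≤ c) :
    ∫⁻ y, ENNReal.ofReal (a y * φ y) ∂μ +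
        (1 - ∫⁻ y, ENNReal.ofReal (a y) ∂μ) * ENNReal.ofReal c =
      ENNReal.ofReal (c + ∫ y, a y * (φ y - c) ∂μ) := by
  have hai : Integrable a μ := .of_bound ham.aestronglyMeasurable 1 <| .of_forall fun y => by
    rw [norm_of_nonneg (ha0 y)]
    exact ha1 y
  have hmass : ∫ y, a y ∂μ ≤ 1 := by
    simpa using integral_mono hai (integrable_const 1) ha1
  have hmean : 0 ≤ ∫ y, a y * φ y ∂μ := integral_nonneg fun y => mul_nonneg (ha0 y) (hφ y)
  rw [← ofReal_integral_eq_lintegral_ofReal hint (.of_forall fun y => mul_nonneg (ha0 y) (hφ y)),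
    ← ofReal_integral_eq_lintegral_ofReal hai (.of_forall ha0), ← ENNReal.ofReal_one,
    ← ENNReal.ofReal_sub _ (integral_nonneg ha0), ← ENNReal.ofReal_mul (sub_nonneg.2 hmass),
    ← ENNReal.ofReal_add hmean (mul_nonneg (sub_nonneg.2 hmass) hc)]
  simp only [mul_sub]
  rw [integral_sub hint (hai.mul_const c), integral_mul_const]
  ring_nf

theorem patchedKernel_univ_le_one (hβ : 0 < β) (hh : 0 < h) (hU : Measurable U) (Estar : ℝ)
    (x : Euc n) : patchedKernel n β h Estar U x Set.univ ≤ 1 := by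
  have := isProbabilityMeasure_eulerKernel hβ hh U x
  have hmass : ∫⁻ y, ENNReal.ofReal (acceptBar n β h Estar U x y) ∂eulerKernel n β h U x ≤ 1 :=
    calc _ ≤ ∫⁻ _, 1 ∂eulerKernel n β h U x := lintegral_mono fun y =>
          ENNReal.ofReal_le_one.2 (acceptBar_le_one n β h Estar U x y)
      _ = 1 := by simp
  simp [patchedKernel_eq_withDensity_eulerKernel hβ hh hU, add_tsub_cancel_of_le hmass]

open scoped Classical in
/-- The Lyapunov function `exp (θ U)`, set to `∞` off the level set `R_h`. The patched chain never
leaves `R_h`, so this changes nothing along its paths, and it makes a drift inequality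
`P̄ V ≤ a V + b` with `0 < a` trivial off `R_h`. -/
def lyapunov (h Estar θ : ℝ) (U : Euc n → ℝ) (y : Euc n) : ℝ≥0∞ :=
  if y ∈ Rset n h Estar U then ENNReal.ofReal (exp (θ * U y)) else ⊤

theorem measurable_lyapunov (hU : Measurable U) (h Estar θ : ℝ) :
    Measurable (lyapunov h Estar θ U) :=
  Measurable.ite (measurableSet_Rset hU h Estar) (hU.const_mul θ).exp.ennreal_ofReal
    measurable_const

theorem ofReal_exp_le_lyapunov (h Estar θ : ℝ) (U : Euc n → ℝ) (y : Euc n) :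
    ENNReal.ofReal (exp (θ * U y)) ≤ lyapunov h Estar θ U y := by
  rw [lyapunov]
  split_ifs
  exacts [le_rfl, le_top]

theorem lintegral_lyapunov_patchedKernel (hβ : 0 < β) (hh : 0 < h) (hU : Measurable U)
    (hθ : 0 ≤ θ) (hx : x ∈ Rset n h Estar U) :
    ∫⁻ y, lyapunov h Estar θ U y ∂patchedKernel n β h Estar U x =
      ENNReal.ofReal (exp (θ * U x) *
        (1 + ∫ y, acceptBar n β h Estar U x y * (exp (θ * (U y - U x)) - 1)
          ∂eulerKernel n β h U x)) := by
  have := isProbabilityMeasure_eulerKernel hβ hh U x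
  have hacc := measurable_acceptBar hU β h Estar x
  have hV := measurable_lyapunov hU h Estar θ
  have hmul (y : Euc n) : ENNReal.ofReal (acceptBar n β h Estar U x y) * lyapunov h Estar θ U y =
      ENNReal.ofReal (acceptBar n β h Estar U x y * exp (θ * U y)) := by
    by_cases hy : y ∈ Rset n h Estar U
    · rw [lyapunov, if_pos hy, ENNReal.ofReal_mul (acceptBar_nonneg hβ hh Estar U x y)]
    · simp [acceptBar, hy]
  have hfactor (y : Euc n) : acceptBar n β h Estar U x y * (exp (θ * U y) - exp (θ * U x)) =
      exp (θ * U x) * (acceptBar n β h Estar U x y * (exp (θ * (U y - U x)) - 1)) := by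
    have hsplit : exp (θ * U y) = exp (θ * U x) * exp (θ * (U y - U x)) := by
      rw [← exp_add]
      ring_nf
    rw [hsplit]
    ring
  rw [patchedKernel_eq_withDensity_eulerKernel hβ hh hU, lintegral_add_measure,
    lintegral_smul_measure, lintegral_dirac' _ hV,
    lintegral_withDensity_eq_lintegral_mul _ hacc.ennreal_ofReal hV]
  simp only [Pi.mul_apply, hmul, smul_eq_mul]
  rw [lyapunov, if_pos hx, lintegral_ofReal_mul_add_one_sub_lintegral_mul hacc
    (acceptBar_nonneg hβ hh Estar U x) (acceptBar_le_one n β h Estar U x)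
    (fun y => exp_nonneg _) (integrable_acceptBar_mul_exp hβ hh hU hθ Estar x) (exp_nonneg _)]
  simp only [hfactor, integral_const_mul, mul_add, mul_one]

end PatchedKernel

section DriftIteration

variable {α : Type*} [MeasurableSpace α] {κ : α → Measure α}

theorem iterKernel_univ_le_one (hκ : ∀ x, κ x Set.univ ≤ 1) (k : ℕ) (x : α) :
    iterKernel κ k x Set.univ ≤ 1 := by
  induction k with
  | zero => simp [iterKernel]
  | succ k ih =>
    calc iterKernel κ (k + 1) x Set.univ = ∫⁻ _, 1 ∂(iterKernel κ k x).bind κ := by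
          simp [iterKernel]
      _ ≤ ∫⁻ z, ∫⁻ _, 1 ∂κ z ∂iterKernel κ k x := Measure.lintegral_bind_le _ _ _
      _ ≤ ∫⁻ _, 1 ∂iterKernel κ k x := lintegral_mono fun z => by simpa using hκ z
      _ ≤ 1 := by simpa using ih

variable {V : α → ℝ≥0∞}

theorem lintegral_iterKernel_le {a b : ℝ≥0∞} (hκ : ∀ x, κ x Set.univ ≤ 1) (hV : Measurable V)
    (ha : a ≤ 1) (hdrift : ∀ x, ∫⁻ y, V y ∂κ x ≤ a * V x + b) (k : ℕ) (x : α) :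
    ∫⁻ y, V y ∂iterKernel κ k x ≤ a ^ k * V x + k * b := by
  induction k with
  | zero => simp [iterKernel, lintegral_dirac' _ hV]
  | succ k ih =>
    calc ∫⁻ y, V y ∂(iterKernel κ k x).bind κ
        ≤ ∫⁻ z, ∫⁻ y, V y ∂κ z ∂iterKernel κ k x := Measure.lintegral_bind_le _ _ _
      _ ≤ ∫⁻ z, (a * V z + b) ∂iterKernel κ k x := lintegral_mono hdrift
      _ = a * ∫⁻ z, V z ∂iterKernel κ k x + b * iterKernel κ k x Set.univ := by
        rw [lintegral_add_right _ measurable_const, lintegral_const_mul _ hV, lintegral_const]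
      _ ≤ a * (a ^ k * V x + k * b) + b * 1 := by
        gcongr
        exact iterKernel_univ_le_one hκ k x
      _ = a ^ (k + 1) * V x + (a * (k * b) + b) := by ring
      _ ≤ a ^ (k + 1) * V x + (1 * (k * b) + b) := by gcongr
      _ = a ^ (k + 1) * V x + (k + 1 : ℕ) * b := by
        push_cast
        ring

theorem one_sub_mul_pow_floor_le {γ h : ℝ} (hγ : 0 ≤ γ) (hh : 0 < h) (hh2 : h ≤ 1 / 2)
    (hγh : γ * h ≤ 1) : (1 - γ * h) ^ ⌊1 / h⌋₊ ≤ exp (-(γ / 2)) := by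
  have hfloor : 1 / 2 ≤ ⌊1 / h⌋₊ * h := by
    have := (div_lt_iff₀ hh).1 (Nat.lt_floor_add_one (1 / h))
    linarith
  calc (1 - γ * h) ^ ⌊1 / h⌋₊ ≤ exp (-(γ * h)) ^ ⌊1 / h⌋₊ := by
        gcongr
        exact one_sub_le_exp_neg _
    _ = exp (-(γ * (⌊1 / h⌋₊ * h))) := by
        rw [← exp_nat_mul]
        ring_nf
    _ ≤ exp (-(γ * (1 / 2))) := by gcongr
    _ = exp (-(γ / 2)) := by ring_nf

theorem lintegral_iterKernel_floor_le {γ h K : ℝ} (hκ : ∀ x, κ x Set.univ ≤ 1)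
    (hV : Measurable V) (hγ : 0 ≤ γ) (hh : 0 < h) (hh2 : h ≤ 1 / 2) (hγh : γ * h ≤ 1)
    (hK : 0 ≤ K) (hdrift : ∀ x, ∫⁻ y, V y ∂κ x ≤
      ENNReal.ofReal (1 - γ * h) * V x + ENNReal.ofReal (h * K)) (x : α) :
    ∫⁻ y, V y ∂iterKernel κ ⌊1 / h⌋₊ x ≤
      ENNReal.ofReal (exp (-(γ / 2))) * V x + ENNReal.ofReal K := by
  have ha : ENNReal.ofReal (1 - γ * h) ≤ 1 := by
    rw [ENNReal.ofReal_le_one]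
    linarith [mul_nonneg hγ hh.le]
  refine (lintegral_iterKernel_le hκ hV ha hdrift _ x).trans ?_
  rw [← ENNReal.ofReal_pow (sub_nonneg.2 hγh), ← ENNReal.ofReal_natCast,
    ← ENNReal.ofReal_mul (Nat.cast_nonneg _), ← mul_assoc]
  have hfloor : ⌊1 / h⌋₊ * h ≤ 1 := (le_div_iff₀ hh).1 (Nat.floor_le (by positivity))
  gcongr
  · exact one_sub_mul_pow_floor_le hγ hh hh2 hγh
  · exact mul_le_of_le_one_left hK hfloor

end DriftIteration

section ExpectedIncrement

variable {n : ℕ} {β h s θ C L : ℝ} {U : Euc n → ℝ} {x : Euc n}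

theorem lapl_eq_sum_fderiv_fderiv (U : Euc n → ℝ) (x : Euc n) :
    lapl U x = ∑ i, fderiv ℝ (fderiv ℝ U) x (EuclideanSpace.single i 1)
      (EuclideanSpace.single i 1) := by
  simp [lapl, D2, iteratedFDeriv_two_apply]

theorem TamePotential.lapl_le (hU : TamePotential C U) (x : Euc n) :
    lapl U x ≤ n * (C * U x) := by
  have hterm (i : Fin n) : fderiv ℝ (fderiv ℝ U) x (EuclideanSpace.single i 1)
      (EuclideanSpace.single i 1) ≤ C * U x := by
    have hunit : ‖(EuclideanSpace.single i 1 : Euc n)‖ ≤ 1 := by simp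
    simpa using (le_abs_self _).trans ((fderiv ℝ (fderiv ℝ U) x).le_of_opNorm₂_le_of_le
      (hU.norm_fderiv_fderiv_le x) hunit hunit)
  calc lapl U x ≤ ∑ _ : Fin n, C * U x := by
        rw [lapl_eq_sum_fderiv_fderiv]
        exact Finset.sum_le_sum fun i _ => hterm i
    _ = n * (C * U x) := by simp

theorem TamePotential.fderiv_fderiv_gradient_le (hU : TamePotential C U) (x : Euc n) :
    fderiv ℝ (fderiv ℝ U) x (gradient U x) (gradient U x) ≤ (C * U x) ^ 3 := by
  have hgrad : ‖gradient U x‖ ≤ C * U x := (norm_gradient U x).trans_le (hU.norm_fderiv_le x)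
  calc _ ≤ C * U x * (C * U x) * (C * U x) := (le_abs_self _).trans
        ((fderiv ℝ (fderiv ℝ U) x).le_of_opNorm₂_le_of_le (hU.norm_fderiv_fderiv_le x) hgrad hgrad)
    _ = (C * U x) ^ 3 := by ring

theorem integral_quadratic_eulerKernel (hβ : 0 < β) (hh : 0 < h) (θ : ℝ) (U : Euc n → ℝ)
    (x : Euc n) (a : ℝ) :
    ∫ y, (θ * (fderiv ℝ U x (y - x) + fderiv ℝ (fderiv ℝ U) x (y - x) (y - x) / 2) +
        a * ‖y - x‖ ^ 2) ∂eulerKernel n β h U x =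
      θ * (h * (lapl U x / β - ‖gradient U x‖ ^ 2) +
        h ^ 2 / 2 * fderiv ℝ (fderiv ℝ U) x (gradient U x) (gradient U x)) +
        a * (2 * h * n / β + h ^ 2 * ‖gradient U x‖ ^ 2) := by
  have hlinear := integrable_clm_sub_eulerKernel hβ hh U x (fderiv ℝ U x)
  have hbilin := (integrable_bilin_sub_eulerKernel hβ hh U x (fderiv ℝ (fderiv ℝ U) x)).div_const 2
  have htaylor : Integrable (fun y => fderiv ℝ U x (y - x) +
      fderiv ℝ (fderiv ℝ U) x (y - x) (y - x) / 2) (eulerKernel n β h U x) := hlinear.add hbilin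
  have hsq := integrable_sq_norm_sub_eulerKernel hβ hh U x
  rw [integral_add (htaylor.const_mul θ) (hsq.const_mul a), integral_const_mul,
    integral_const_mul, integral_add hlinear hbilin, integral_div,
    integral_clm_sub_eulerKernel hβ hh, integral_bilin_sub_eulerKernel hβ hh,
    integral_sq_norm_sub_eulerKernel hβ hh, ← lapl_eq_sum_fderiv_fderiv, ← inner_gradient,
    real_inner_self_eq_norm_sq]
  ring

theorem integrable_quadratic_eulerKernel (hβ : 0 < β) (hh : 0 < h) (θ : ℝ) (U : Euc n → ℝ)
    (x : Euc n) (a : ℝ) :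
    Integrable (fun y => θ * (fderiv ℝ U x (y - x) +
      fderiv ℝ (fderiv ℝ U) x (y - x) (y - x) / 2) + a * ‖y - x‖ ^ 2) (eulerKernel n β h U x) :=
  (((integrable_clm_sub_eulerKernel hβ hh U x _).add
    ((integrable_bilin_sub_eulerKernel hβ hh U x _).div_const 2)).const_mul θ).add
    ((integrable_sq_norm_sub_eulerKernel hβ hh U x).const_mul a)

/-- The bound is uniform in `x` because the drift `s ^ 4 * ‖∇U x‖` is of order `s ^ 3` on the level
set, hence negligible at the scale `s ^ 2` of the noise. -/
theorem integral_exp_scaled_norm_sub_eulerKernel_le (hβ : 0 < β) (hs : 0 < s) (hs1 : s ≤ 1)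
    (hgrad : ‖gradient U x‖ * s ≤ L) :
    ∫ y, exp (2 / s ^ 2 * ‖y - x‖) ∂eulerKernel n β (s ^ 4) U x ≤
      exp (2 * L + 8 / β) * 2 ^ ((n : ℝ) / 2) := by
  have hdrift : 2 / s ^ 2 * (s ^ 4 * ‖gradient U x‖) ≤ 2 * L :=
    calc _ = s * (2 * (‖gradient U x‖ * s)) := by field_simp
      _ ≤ 2 * (‖gradient U x‖ * s) := mul_le_of_le_one_left (by positivity) hs1
      _ ≤ 2 * L := by gcongr
  have hnoise : 2 * (2 / s ^ 2) ^ 2 * s ^ 4 / β = 8 / β := by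
    field_simp
    norm_num
  refine (integral_exp_mul_norm_sub_eulerKernel_le hβ (by positivity) U x
    (by positivity)).trans ?_
  rw [hnoise]
  gcongr

theorem TamePotential.integral_quadratic_eulerKernel_le (hU : TamePotential C U) (hβ : 0 < β)
    (hs : 0 < s) (hs1 : s ≤ 1) (hθ : 0 ≤ θ) (hθ1 : θ ≤ 1) (hL : C * U x * s ≤ L) :
    ∫ y, (θ * (fderiv ℝ U x (y - x) + fderiv ℝ (fderiv ℝ U) x (y - x) (y - x) / 2) +
        2 * θ ^ 2 * ‖gradient U x‖ ^ 2 * ‖y - x‖ ^ 2) ∂eulerKernel n β (s ^ 4) U x ≤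
      s ^ 4 * (θ * (lapl U x / β - ‖gradient U x‖ ^ 2 +
        θ * (4 * n / β + 2 * L ^ 2) * ‖gradient U x‖ ^ 2)) + s ^ 5 * L ^ 3 := by
  have hCU : 0 ≤ C * U x := mul_nonneg hU.nonneg (hU.pos x).le
  have hgrad : ‖gradient U x‖ ≤ C * U x := (norm_gradient U x).trans_le (hU.norm_fderiv_le x)
  have hhess : θ * (s ^ 8 / 2 * fderiv ℝ (fderiv ℝ U) x (gradient U x) (gradient U x)) ≤
      s ^ 5 * L ^ 3 :=
    calc _ ≤ θ * (s ^ 8 / 2 * (C * U x) ^ 3) := by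
          gcongr
          exact hU.fderiv_fderiv_gradient_le x
      _ = θ * (s ^ 5 * (C * U x * s) ^ 3) / 2 := by ring
      _ ≤ 1 * (s ^ 5 * L ^ 3) / 2 := by gcongr
      _ ≤ s ^ 5 * L ^ 3 := by
        have : 0 ≤ L := le_trans (by positivity) hL
        rw [one_mul]
        exact half_le_self (by positivity)
  have hdrift : s ^ 4 * ‖gradient U x‖ ^ 2 ≤ L ^ 2 :=
    calc _ = s ^ 2 * (‖gradient U x‖ * s) ^ 2 := by ring
      _ ≤ 1 ^ 2 * (C * U x * s) ^ 2 := by gcongr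
      _ ≤ 1 ^ 2 * L ^ 2 := by gcongr
      _ = L ^ 2 := by ring
  have hsecond : s ^ 4 * (2 * θ ^ 2 * ‖gradient U x‖ ^ 2) * (s ^ 4 * ‖gradient U x‖ ^ 2) ≤
      s ^ 4 * (2 * θ ^ 2 * ‖gradient U x‖ ^ 2) * L ^ 2 := by gcongr
  rw [integral_quadratic_eulerKernel hβ (pow_pos hs 4)]
  linear_combination hhess + hsecond

theorem TamePotential.integral_acceptBar_mul_exp_sub_one_le (hU : TamePotential C U) (hβ : 0 < β)
    (hs : 0 < s) (hs1 : s ≤ 1) (hθ : 0 ≤ θ) (hθ1 : θ ≤ 1) (hL : C * exp C ≤ L) (hθL : θ * L ≤ 1)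
    (hx : x ∈ Rset n (s ^ 4) 1 U) :
    ∫ y, acceptBar n β (s ^ 4) 1 U x y * (exp (θ * (U y - U x)) - 1) ∂eulerKernel n β (s ^ 4) U x ≤
      s ^ 4 * (θ * (lapl U x / β - ‖gradient U x‖ ^ 2 +
        θ * (4 * n / β + 2 * L ^ 2) * ‖gradient U x‖ ^ 2)) +
      s ^ 5 * (L ^ 3 +
        (300 + β * (24 * L + 2 * L ^ 2)) * (exp (2 * L + 8 / β) * 2 ^ ((n : ℝ) / 2))) := by
  have hh : 0 < s ^ 4 := pow_pos hs 4
  have hCL : C ≤ L := (le_mul_of_one_le_right hU.nonneg (one_le_exp hU.nonneg)).trans hL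
  have hL0 : 0 ≤ L := hU.nonneg.trans hCL
  have hCUL : C * U x * s ≤ L := by
    have hUs := (lt_div_iff₀ hs).1 ((mem_Rset_pow_four hs).1 hx)
    nlinarith [hU.nonneg]
  have hgrad : ‖gradient U x‖ * s ≤ L :=
    (mul_le_mul_of_nonneg_right ((norm_gradient U x).trans_le (hU.norm_fderiv_le x)) hs.le).trans
      hCUL
  set R := 300 + β * (24 * L + 2 * L ^ 2)
  have : 0 ≤ R := by positivity
  have hquad := integrable_quadratic_eulerKernel hβ hh θ U x (2 * θ ^ 2 * ‖gradient U x‖ ^ 2)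
  have hexp := (integrable_exp_mul_norm_sub_eulerKernel hβ hh U x
    (by positivity : 0 ≤ 2 / s ^ 2)).const_mul (R * s ^ 5)
  have hpoint (y : Euc n) := hU.acceptBar_mul_exp_sub_one_le hβ hs hs1 hθ hθ1 hL hθL hx y
  simp only [← norm_gradient] at hpoint
  calc _ ≤ _ := integral_mono (integrable_acceptBar_mul_exp_sub_one hβ hh
          hU.contDiff.continuous.measurable hθ 1 x) (hquad.add hexp) hpoint
    _ = _ := integral_add' hquad hexp
    _ ≤ _ := add_le_add
        (hU.integral_quadratic_eulerKernel_le hβ hs hs1 hθ hθ1 hCUL)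
        ((integral_const_mul _ _).trans_le (mul_le_mul_of_nonneg_left
          (integral_exp_scaled_norm_sub_eulerKernel_le hβ hs hs1 hgrad) (by positivity)))
    _ = _ := by ring

end ExpectedIncrement

theorem eventually_mul_le_nhdsGT_zero (a : ℝ) {ε : ℝ} (hε : 0 < ε) :
    ∀ᶠ t in nhdsWithin (0 : ℝ) (Set.Ioi 0), t * a ≤ ε := by
  have hlim : Tendsto (fun t : ℝ => t * a) (nhdsWithin 0 (Set.Ioi 0)) (nhds 0) :=
    ((continuous_mul_const a).tendsto' 0 0 (zero_mul a)).mono_left nhdsWithin_le_nhds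
  exact hlim.eventually_le_const hε

section OneStepDrift

variable {n : ℕ} {β c d EB C θ L W R I s : ℝ} {U : Euc n → ℝ} {x : Euc n}

theorem exp_mul_one_add_le_of_lapl_le (hβ : 0 < β) (hθ : 0 ≤ θ)
    (hθW : θ * W ≤ 1 - c / β) (hsR : s * R ≤ θ * d / (2 * β))
    (hdrift : lapl U x ≤ c * ‖gradient U x‖ ^ 2 - d)
    (hI : I ≤ s ^ 4 * (θ * (lapl U x / β - ‖gradient U x‖ ^ 2 +
      θ * W * ‖gradient U x‖ ^ 2)) + s ^ 5 * R) :
    exp (θ * U x) * (1 + I) ≤ (1 - θ * d / (2 * β) * s ^ 4) * exp (θ * U x) := by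
  have hgenerator : lapl U x / β - ‖gradient U x‖ ^ 2 + θ * W * ‖gradient U x‖ ^ 2 ≤ -(d / β) :=
    calc _ ≤ (c * ‖gradient U x‖ ^ 2 - d) / β - ‖gradient U x‖ ^ 2 +
          (1 - c / β) * ‖gradient U x‖ ^ 2 := by gcongr
      _ = -(d / β) := by ring
  have hincrement : I ≤ -(θ * d / (2 * β) * s ^ 4) :=
    calc I ≤ s ^ 4 * (θ * -(d / β)) + s ^ 4 * (s * R) := by
          rw [← mul_assoc (s ^ 4) s, ← pow_succ]
          exact hI.trans (by gcongr)
      _ ≤ s ^ 4 * (θ * -(d / β)) + s ^ 4 * (θ * d / (2 * β)) := by gcongr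
      _ = _ := by
        field_simp
        ring
  rw [mul_comm]
  gcongr
  linarith

theorem TamePotential.exp_mul_one_add_le_of_le (hU : TamePotential C U) (hβ : 0 < β)
    (hs : 0 ≤ s) (hs1 : s ≤ 1) (hθ : 0 ≤ θ) (hθW : θ * W ≤ 1) (hR : 0 ≤ R) (hUx : U x ≤ EB)
    {γ : ℝ} (hγ : 0 ≤ γ)
    (hI : I ≤ s ^ 4 * (θ * (lapl U x / β - ‖gradient U x‖ ^ 2 +
      θ * W * ‖gradient U x‖ ^ 2)) + s ^ 5 * R) :
    exp (θ * U x) * (1 + I) ≤ (1 - γ * s ^ 4) * exp (θ * U x) +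
      s ^ 4 * ((θ * (n * (C * EB) / β) + R + γ) * exp (θ * EB)) := by
  have hC := hU.nonneg
  have hEB : 0 ≤ EB := (hU.pos x).le.trans hUx
  have hgenerator : lapl U x / β - ‖gradient U x‖ ^ 2 + θ * W * ‖gradient U x‖ ^ 2 ≤
      n * (C * EB) / β :=
    calc _ ≤ n * (C * EB) / β - ‖gradient U x‖ ^ 2 + 1 * ‖gradient U x‖ ^ 2 := by
          gcongr
          exact (hU.lapl_le x).trans (by gcongr)
      _ = _ := by ring
  have hincrement : I + γ * s ^ 4 ≤ s ^ 4 * (θ * (n * (C * EB) / β) + R + γ) :=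
    calc I + γ * s ^ 4 ≤ s ^ 4 * (θ * (n * (C * EB) / β)) + s ^ 4 * R + γ * s ^ 4 := by
          gcongr
          refine hI.trans ?_
          gcongr ?_ + ?_ * R
          · gcongr
          · exact pow_le_pow_of_le_one hs hs1 (by norm_num)
      _ = _ := by ring
  calc exp (θ * U x) * (1 + I) = (1 - γ * s ^ 4) * exp (θ * U x) +
        (I + γ * s ^ 4) * exp (θ * U x) := by ring
    _ ≤ (1 - γ * s ^ 4) * exp (θ * U x) +
        s ^ 4 * (θ * (n * (C * EB) / β) + R + γ) * exp (θ * EB) := by gcongr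
    _ = _ := by ring

theorem TamePotential.exists_one_step_drift (hU : TamePotential C U) (hβ : 0 < β) (hcβ : c < β)
    (hd : 0 < d) (hdrift : ∀ x, EB < U x → lapl U x ≤ c * ‖gradient U x‖ ^ 2 - d) :
    ∃ θ ∈ Set.Ioo 0 (β - c), ∃ γ > 0, ∃ K > 0, ∀ᶠ s in nhdsWithin (0 : ℝ) (Set.Ioi 0),
      ∀ x ∈ Rset n (s ^ 4) 1 U,
        exp (θ * U x) * (1 + ∫ y, acceptBar n β (s ^ 4) 1 U x y * (exp (θ * (U y - U x)) - 1)
          ∂eulerKernel n β (s ^ 4) U x) ≤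
        (1 - γ * s ^ 4) * exp (θ * U x) + s ^ 4 * K := by
  have hC := hU.nonneg
  set L := C * exp C with hL
  set W := 4 * n / β + 2 * L ^ 2
  set R := L ^ 3 + (300 + β * (24 * L + 2 * L ^ 2)) * (exp (2 * L + 8 / β) * 2 ^ ((n : ℝ) / 2))
  have : 0 ≤ L := by positivity
  have hR : 0 ≤ R := by positivity
  have hgap : 0 < 1 - c / β := by rwa [sub_pos, div_lt_one hβ]
  obtain ⟨θ, ⟨hθ, hθβ⟩, hθ1, hθL, hθW, hθW1⟩ := (Eventually.and (Ioo_mem_nhdsGT (sub_pos.2 hcβ))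
    ((eventually_mul_le_nhdsGT_zero 1 one_pos).and ((eventually_mul_le_nhdsGT_zero L one_pos).and
    ((eventually_mul_le_nhdsGT_zero W hgap).and
    (eventually_mul_le_nhdsGT_zero W one_pos))))).exists
  have hγ : 0 < θ * d / (2 * β) := by positivity
  set K := (θ * (n * (C * |EB|) / β) + R + θ * d / (2 * β)) * exp (θ * |EB|)
  have hK : 0 < K := by positivity
  refine ⟨θ, ⟨hθ, hθβ⟩, θ * d / (2 * β), hγ, K, hK, ?_⟩
  filter_upwards [Ioo_mem_nhdsGT one_pos, eventually_mul_le_nhdsGT_zero R hγ] with s hs hsR x hx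
  have hI := hU.integral_acceptBar_mul_exp_sub_one_le hβ hs.1 hs.2.le hθ.le
    (mul_one θ ▸ hθ1) hL.ge hθL hx
  rcases lt_or_ge EB (U x) with hlarge | hsmall
  · exact (exp_mul_one_add_le_of_lapl_le hβ hθ.le hθW hsR (hdrift x hlarge) hI).trans
      (le_add_of_nonneg_right (mul_nonneg (pow_nonneg hs.1.le 4) hK.le))
  · exact hU.exp_mul_one_add_le_of_le hβ hs.1.le hs.2.le hθ.le hθW1 hR
      (hsmall.trans (le_abs_self EB)) hγ.le hI

end OneStepDrift

section UnitTimeDrift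

variable {n : ℕ} {β h θ Estar γ K : ℝ} {U : Euc n → ℝ}

theorem lintegral_lyapunov_patchedKernel_le (hU : Measurable U) (hβ : 0 < β) (hh : 0 < h)
    (hθ : 0 ≤ θ) (hγh : γ * h < 1) (hK : 0 ≤ K)
    (hstep : ∀ x ∈ Rset n h Estar U,
      exp (θ * U x) * (1 + ∫ y, acceptBar n β h Estar U x y * (exp (θ * (U y - U x)) - 1)
        ∂eulerKernel n β h U x) ≤ (1 - γ * h) * exp (θ * U x) + h * K) (x : Euc n) :
    ∫⁻ y, lyapunov h Estar θ U y ∂patchedKernel n β h Estar U x ≤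
      ENNReal.ofReal (1 - γ * h) * lyapunov h Estar θ U x + ENNReal.ofReal (h * K) := by
  have hγh' : 0 < 1 - γ * h := sub_pos.2 hγh
  by_cases hx : x ∈ Rset n h Estar U
  · rw [lintegral_lyapunov_patchedKernel hβ hh hU hθ hx, lyapunov,
      if_pos hx, ← ENNReal.ofReal_mul hγh'.le,
      ← ENNReal.ofReal_add (by positivity) (by positivity)]
    exact ENNReal.ofReal_le_ofReal (hstep x hx)
  · rw [lyapunov, if_neg hx, ENNReal.mul_top (ENNReal.ofReal_pos.2 hγh').ne', top_add]
    exact le_top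

theorem integral_exp_iterKernel_patchedKernel_le (hU : Measurable U) (hβ : 0 < β) (hh : 0 < h)
    (hh2 : h ≤ 1 / 2) (hθ : 0 ≤ θ) (hγ : 0 ≤ γ) (hγh : γ * h < 1) (hK : 0 ≤ K)
    (hstep : ∀ x ∈ Rset n h Estar U,
      exp (θ * U x) * (1 + ∫ y, acceptBar n β h Estar U x y * (exp (θ * (U y - U x)) - 1)
        ∂eulerKernel n β h U x) ≤ (1 - γ * h) * exp (θ * U x) + h * K)
    {x : Euc n} (hx : x ∈ Rset n h Estar U) :
    ∫ y, exp (θ * U y) ∂iterKernel (patchedKernel n β h Estar U) ⌊1 / h⌋₊ x ≤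
      exp (-(γ / 2)) * exp (θ * U x) + K := by
  have hiter := lintegral_iterKernel_floor_le (patchedKernel_univ_le_one hβ hh hU Estar)
    (measurable_lyapunov hU h Estar θ) hγ hh hh2 hγh.le hK
    (lintegral_lyapunov_patchedKernel_le hU hβ hh hθ hγh hK hstep) x
  rw [lyapunov, if_pos hx, ← ENNReal.ofReal_mul (exp_nonneg _),
    ← ENNReal.ofReal_add (by positivity) hK] at hiter
  rw [integral_eq_lintegral_of_nonneg_ae (.of_forall fun y => exp_nonneg _)
    (hU.const_mul θ).exp.aestronglyMeasurable]
  exact ENNReal.toReal_le_of_le_ofReal (by positivity)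
    ((lintegral_mono (ofReal_exp_le_lyapunov h Estar θ U)).trans hiter)

end UnitTimeDrift

theorem patched_mala_unit_time_drift_general {n : ℕ} {β c d EB C : ℝ} (hβ : 0 < β) (hcβ : c < β)
    (hd : 0 < d) {U : Euc n → ℝ} (hU : TamePotential C U)
    (hdrift : ∀ x, EB < U x → lapl U x ≤ c * ‖gradient U x‖ ^ 2 - d) :
    ∃ θ ∈ Set.Ioo (0 : ℝ) (β - c), ∃ γ > (0 : ℝ), ∃ K > (0 : ℝ), ∃ Estar > (0 : ℝ), ∃ hc > (0 : ℝ),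
      ∀ h : ℝ, 0 < h → h < hc → ∀ x ∈ Rset n h Estar U,
        ∫ y, exp (θ * U y) ∂(iterKernel (patchedKernel n β h Estar U) (Nat.floor (1 / h)) x)
          ≤ exp (-γ) * exp (θ * U x) + K := by
  obtain ⟨θ, hθ, γ, hγ, K, hK, hstep⟩ := hU.exists_one_step_drift hβ hcβ hd hdrift
  obtain ⟨s₀, hs₀, hstep⟩ := mem_nhdsGT_iff_exists_Ioo_subset.1 hstep
  refine ⟨θ, hθ, γ / 2, half_pos hγ, K, hK, 1, one_pos, min (s₀ ^ 4) (min (1 / 2) (1 / γ)),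
    lt_min (pow_pos hs₀ 4) (by positivity), fun h hh hhc x hx => ?_⟩
  obtain ⟨hhs₀, hh2, hhγ⟩ := by simpa only [lt_min_iff] using hhc
  obtain ⟨s, hs, rfl⟩ : ∃ s : ℝ, 0 < s ∧ s ^ 4 = h :=
    ⟨h ^ (4 : ℝ)⁻¹, by positivity, rpow_inv_natCast_pow hh.le four_ne_zero⟩
  have hss₀ : s < s₀ := lt_of_pow_lt_pow_left₀ 4 hs₀.le hhs₀
  exact integral_exp_iterKernel_patchedKernel_le hU.contDiff.continuous.measurable hβ hh hh2.le
    hθ.1.le hγ.le ((lt_div_iff₀' hγ).1 hhγ) hK.le (hstep ⟨hs, hss₀⟩) hx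

theorem Assumption1.exists_tamePotential {n : ℕ} {β : ℝ} {U : Euc n → ℝ} (hU : Assumption1 n β U) :
    ∃ C, TamePotential C U := by
  obtain ⟨C, -, hC⟩ := hU.deriv_bound
  refine ⟨C, fun x => one_pos.trans_le (hU.one_le x), hU.smooth.of_le (by norm_num),
    fun k hk x => ?_⟩
  obtain ⟨⟨⟨-, h3⟩, h2⟩, h1⟩ := by simpa only [sup_le_iff] using hC x
  fin_cases hk
  · simpa [norm_gradient] using h1
  · exact h2
  · exact h3

/-- Drift condition for patched MALA over unit physical time. -/
theorem patched_mala_unit_time_drift (n : ℕ) (β : ℝ) (hβ : 0 < β)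
    (U : Euc n → ℝ) (hU : Assumption1 n β U) :
    ∃ θ ∈ Set.Ioo (0:ℝ) (β - hU.c), ∃ γ > (0:ℝ), ∃ K > (0:ℝ), ∃ Estar > (0:ℝ), ∃ hc > (0:ℝ),
      ∀ h : ℝ, 0 < h → h < hc → ∀ x ∈ Rset n h Estar U,
        ∫ y, exp (θ * U y) ∂(iterKernel (patchedKernel n β h Estar U) (Nat.floor (1/h)) x)
          ≤ exp (-γ) * exp (θ * U x) + K := by
  obtain ⟨C, htame⟩ := hU.exists_tamePotential
  exact patched_mala_unit_time_drift_general hβ hU.c_lt hU.d_pos htame fun x hx =>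
    (hU.driftB x hx).trans
      (sub_le_sub_left (le_mul_of_one_le_right hU.d_pos.le (hU.one_le x)) _)

end
end

section
/- (Truncated drift condition for forward Euler.) Let U satisfy Assumption 1. For every real ℓ > 1 there exist positive constants α_ℓ and K_ℓ such that for every stepsize h ∈ (0,1) and every x ∈ ℝ^n, the expectation over a standard Gaussian random vector ξ ∼ N(0,I) on ℝ^n satisfies E[ (U(x − h∇U(x) + √(2β⁻¹h)·ξ) ∧ α_ℓ·h^{−1/2})^ℓ ] ≤ (U(x) ∧ α_ℓ·h^{−1/2})^ℓ + h·K_ℓ. -/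
open MeasureTheory Real Filter
open scoped ENNReal

noncomputable section

/-!
Write `V = U ^ ℓ` and let `L` be the generator of the Langevin equation. Each derivative of `U` is
bounded by a multiple of `U`, and this self-bound passes to `V`; in particular `log V` is Lipschitz,
so `V` may be Taylor expanded under the Gaussian integral with a remainder proportional to `V x`.
When `√h ≤ η`, `√h * U x ≤ η` and `η ≤ 1`, the expansion of one Euler step gives
`E V ≤ V x + h (L V x + η P V x)`, with `P` depending only on the constants.

The drift condition gives `L V ≤ -κ V` outside a sublevel set of `U`. Choosing `a` with `a P ≤ κ`,
the step with `η = a` does not increase the expectation there as long as `√h * U x ≤ a`; on the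
sublevel set, `η = 1` costs at most `h K`. In the remaining case `U x > a h ^ (-1/2)` both sides are
capped at the same level, and the inequality is immediate.
-/

open ProbabilityTheory (IsGaussian)
open scoped Gradient InnerProductSpace Laplacian Nat

section Taylor

variable {E F : Type*} [NormedAddCommGroup E] [NormedSpace ℝ E]
  [NormedAddCommGroup F] [NormedSpace ℝ F] [CompleteSpace F]

theorem norm_map_add_sub_taylor_le {f : E → F} {x y : E} {n : ℕ} {M : ℝ}
    (hf : ContDiff ℝ (n + 1) f)
    (hM : ∀ t ∈ Set.Icc (0 : ℝ) 1, ‖iteratedFDeriv ℝ (n + 1) f (x + t • y)‖ ≤ M) :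
    ‖f (x + y) - ∑ k ∈ Finset.range (n + 1), (k ! : ℝ)⁻¹ • iteratedFDeriv ℝ k f x fun _ => y‖
      ≤ (n ! : ℝ)⁻¹ * (M * ‖y‖ ^ (n + 1)) := by
  rw [map_add_eq_sum_add_integral_iteratedFDeriv (n := n) fun t _ => hf.contDiffAt,
    add_sub_cancel_left, norm_smul, norm_inv, RCLike.norm_natCast]
  gcongr
  suffices ∀ t ∈ Set.uIoc (0 : ℝ) 1,
      ‖(1 - t) ^ n • iteratedFDeriv ℝ (n + 1) f (x + t • y) fun _ => y‖ ≤ M * ‖y‖ ^ (n + 1) by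
    simpa using intervalIntegral.norm_integral_le_of_norm_le_const this
  intro t ht
  rw [Set.uIoc_of_le zero_le_one] at ht
  have hpow : ‖(1 - t) ^ n‖ ≤ 1 := by
    rw [norm_pow, Real.norm_of_nonneg (by linarith [ht.2])]
    exact pow_le_one₀ (by linarith [ht.2]) (by linarith [ht.1])
  have happly : ‖iteratedFDeriv ℝ (n + 1) f (x + t • y) fun _ => y‖ ≤ M * ‖y‖ ^ (n + 1) := by
    refine ((iteratedFDeriv ℝ (n + 1) f (x + t • y)).le_of_opNorm_le
      (hM t (Set.Ioc_subset_Icc_self ht)) _).trans_eq ?_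
    simp
  rw [norm_smul]
  exact (mul_le_of_le_one_left (norm_nonneg _) hpow).trans happly

end Taylor

/-- Positive functions whose derivatives of orders `1, …, N` are bounded, in operator norm, by `A`
times the function itself. This is the growth condition on the potential `U`; it is inherited by
the powers of `U` used as Lyapunov functions. -/
structure SelfBoundedDerivs {E : Type*} [NormedAddCommGroup E] [NormedSpace ℝ E]
    (N : ℕ) (A : ℝ) (V : E → ℝ) : Prop where
  contDiff : ContDiff ℝ N V
  pos : ∀ x, 0 < V x
  norm_iteratedFDeriv_le : ∀ k, 1 ≤ k → k ≤ N → ∀ x, ‖iteratedFDeriv ℝ k V x‖ ≤ A * V x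

namespace SelfBoundedDerivs

section NormedSpace

variable {E : Type*} [NormedAddCommGroup E] [NormedSpace ℝ E] {N : ℕ} {A : ℝ} {V : E → ℝ}

theorem norm_fderiv_le (hV : SelfBoundedDerivs N A V) (hN : 1 ≤ N) (x : E) :
    ‖fderiv ℝ V x‖ ≤ A * V x := by
  simpa using hV.norm_iteratedFDeriv_le 1 le_rfl hN x

theorem fderiv_fderiv_le (hV : SelfBoundedDerivs N A V) (hN : 2 ≤ N)
    (x w : E) : fderiv ℝ (fderiv ℝ V) x w w ≤ A * V x * ‖w‖ ^ 2 := by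
  have happly := (iteratedFDeriv ℝ 2 V x).le_of_opNorm_le
    (hV.norm_iteratedFDeriv_le 2 one_le_two hN x) ![w, w]
  simpa [iteratedFDeriv_two_apply, sq] using (le_abs_self _).trans happly

theorem bound_nonneg (hV : SelfBoundedDerivs N A V) (hN : 1 ≤ N) : 0 ≤ A :=
  nonneg_of_mul_nonneg_left ((norm_nonneg _).trans (hV.norm_fderiv_le hN 0)) (hV.pos 0)

/-- `log V` is `A`-Lipschitz. -/
theorem map_add_le (hV : SelfBoundedDerivs N A V) (hN : 1 ≤ N) (x y : E) :
    V (x + y) ≤ V x * exp (A * ‖y‖) := by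
  have hdiff : Differentiable ℝ V := hV.contDiff.differentiable (by positivity)
  have hlog (z : E) : HasFDerivAt (fun z => log (V z)) ((V z)⁻¹ • fderiv ℝ V z) z :=
    (hdiff z).hasFDerivAt.log (hV.pos z).ne'
  have hbound (z : E) : ‖(V z)⁻¹ • fderiv ℝ V z‖ ≤ A := by
    rw [norm_smul, norm_inv, norm_of_nonneg (hV.pos z).le, inv_mul_le_iff₀ (hV.pos z), mul_comm]
    exact hV.norm_fderiv_le hN z
  have hlip : ‖log (V (x + y)) - log (V x)‖ ≤ A * ‖y‖ := by
    simpa using convex_univ.norm_image_sub_le_of_norm_hasFDerivWithin_le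
      (fun z _ => (hlog z).hasFDerivWithinAt) (fun z _ => hbound z)
      (Set.mem_univ x) (Set.mem_univ (x + y))
  rw [← log_le_log_iff (hV.pos _) (mul_pos (hV.pos x) (exp_pos _)),
    log_mul (hV.pos x).ne' (exp_pos _).ne', log_exp]
  linarith [(le_abs_self _).trans hlip]

theorem map_add_le_taylor_two (hV : SelfBoundedDerivs 3 A V) (x y : E) :
    V (x + y) ≤ V x + fderiv ℝ V x y + fderiv ℝ (fderiv ℝ V) x y y / 2
      + A / 2 * V x * (‖y‖ ^ 3 * exp (A * ‖y‖)) := by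
  have hA : 0 ≤ A := hV.bound_nonneg (by norm_num)
  have hthird : ∀ t ∈ Set.Icc (0 : ℝ) 1,
      ‖iteratedFDeriv ℝ 3 V (x + t • y)‖ ≤ A * (V x * exp (A * ‖y‖)) := by
    intro t ht
    have hnorm : ‖t • y‖ ≤ ‖y‖ := by
      rw [norm_smul, norm_of_nonneg ht.1]
      exact mul_le_of_le_one_left (norm_nonneg y) ht.2
    have hVx := hV.pos x
    calc ‖iteratedFDeriv ℝ 3 V (x + t • y)‖ ≤ A * V (x + t • y) :=
          hV.norm_iteratedFDeriv_le 3 (by norm_num) le_rfl _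
      _ ≤ A * (V x * exp (A * ‖t • y‖)) := by gcongr; exact hV.map_add_le (by norm_num) x _
      _ ≤ A * (V x * exp (A * ‖y‖)) := by gcongr
  have htaylor := (le_abs_self _).trans (norm_map_add_sub_taylor_le (n := 2) hV.contDiff hthird)
  simp only [Finset.sum_range_succ, Finset.range_zero, Finset.sum_empty, zero_add,
    iteratedFDeriv_zero_apply, iteratedFDeriv_one_apply, iteratedFDeriv_two_apply, smul_eq_mul,
    Nat.factorial, Nat.cast_one, inv_one, one_mul, Nat.reduceAdd, mul_one] at htaylor
  norm_num at htaylor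
  linarith

theorem map_add_add_smul_le (hV : SelfBoundedDerivs 3 A V) (x : E) {w : E} {t r σ : ℝ}
    (ht : 0 ≤ t) (ht1 : t ≤ 1) (hr : 0 ≤ r) (hσ : 0 ≤ σ) (hw : ‖w‖ ≤ t * r) (ξ : E) :
    V (x + (w + (t * σ) • ξ)) ≤ V x + fderiv ℝ V x (w + (t * σ) • ξ)
      + fderiv ℝ (fderiv ℝ V) x (w + (t * σ) • ξ) (w + (t * σ) • ξ) / 2
      + A / 2 * V x * t ^ 3 * ((r + σ * ‖ξ‖) ^ 3 * exp (A * (r + σ * ‖ξ‖))) := by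
  have hA : 0 ≤ A := hV.bound_nonneg (by norm_num)
  have hVx := hV.pos x
  set y := w + (t * σ) • ξ
  set ρ := r + σ * ‖ξ‖
  have hy : ‖y‖ ≤ t * ρ := by
    calc ‖y‖ ≤ ‖w‖ + ‖(t * σ) • ξ‖ := norm_add_le _ _
      _ = ‖w‖ + t * σ * ‖ξ‖ := by rw [norm_smul, norm_of_nonneg (by positivity)]
      _ ≤ t * ρ := by linarith [mul_add t r (σ * ‖ξ‖)]
  have hρ : 0 ≤ ρ := by positivity
  have hyρ : ‖y‖ ≤ ρ := hy.trans (mul_le_of_le_one_left hρ ht1)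
  have hrem : ‖y‖ ^ 3 * exp (A * ‖y‖) ≤ t ^ 3 * (ρ ^ 3 * exp (A * ρ)) := by
    calc ‖y‖ ^ 3 * exp (A * ‖y‖) ≤ (t * ρ) ^ 3 * exp (A * ρ) := by gcongr
      _ = t ^ 3 * (ρ ^ 3 * exp (A * ρ)) := by ring
  calc V (x + y) ≤ _ := hV.map_add_le_taylor_two x y
    _ ≤ V x + fderiv ℝ V x y + fderiv ℝ (fderiv ℝ V) x y y / 2
        + A / 2 * V x * (t ^ 3 * (ρ ^ 3 * exp (A * ρ))) := by gcongr
    _ = _ := by ring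

theorem const_smul (hV : SelfBoundedDerivs N A V) {c : ℝ} (hc : 0 < c) :
    SelfBoundedDerivs N A (c • V) where
  contDiff := contDiff_const.smul hV.contDiff
  pos x := mul_pos hc (hV.pos x)
  norm_iteratedFDeriv_le k h1k hkN x := by
    rw [iteratedFDeriv_const_smul_apply (hV.contDiff.contDiffAt.of_le (mod_cast hkN)), norm_smul,
      norm_of_nonneg hc.le, Pi.smul_apply, smul_eq_mul, mul_left_comm]
    gcongr
    exact hV.norm_iteratedFDeriv_le k h1k hkN x

theorem exists_norm_iteratedFDeriv_rpow_le (N : ℕ) (A p : ℝ) :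
    ∃ B, ∀ (V : E → ℝ) (x : E), SelfBoundedDerivs N A V → V x = 1 → ∀ k ≤ N,
      ‖iteratedFDeriv ℝ k (fun y => V y ^ p) x‖ ≤ B := by
  set C := ∑ i ∈ Finset.range (N + 1),
    ‖iteratedFDerivWithin ℝ i (fun s : ℝ => s ^ p) (Set.Ioi 0) 1‖
  set D := max A 1
  have hD : 1 ≤ D := le_max_right A 1
  refine ⟨N ! * C * D ^ N, fun V x hV hx k hk => ?_⟩
  have hpow : ContDiffOn ℝ N (fun s : ℝ => s ^ p) (Set.Ioi 0) := fun s hs =>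
    (contDiffAt_rpow_const_of_ne (ne_of_gt hs)).contDiffWithinAt
  have hpowbound (i : ℕ) (hi : i ≤ k) :
      ‖iteratedFDerivWithin ℝ i (fun s : ℝ => s ^ p) (Set.Ioi 0) (V x)‖ ≤ C := by
    rw [hx]
    exact Finset.single_le_sum
      (f := fun i => ‖iteratedFDerivWithin ℝ i (fun s : ℝ => s ^ p) (Set.Ioi 0) 1‖)
      (fun _ _ => norm_nonneg _) (Finset.mem_range_succ_iff.2 (hi.trans hk))
  have hVbound (i : ℕ) (h1i : 1 ≤ i) (hi : i ≤ k) : ‖iteratedFDeriv ℝ i V x‖ ≤ D ^ i := by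
    calc ‖iteratedFDeriv ℝ i V x‖ ≤ A * V x := hV.norm_iteratedFDeriv_le i h1i (hi.trans hk) x
      _ = A := by rw [hx, mul_one]
      _ ≤ D ^ i := (le_max_left A 1).trans (le_self_pow₀ hD (by omega))
  calc ‖iteratedFDeriv ℝ k (fun y => V y ^ p) x‖ ≤ k ! * C * D ^ k :=
        norm_iteratedFDeriv_comp_le' (Set.range_subset_iff.2 hV.pos) (uniqueDiffOn_Ioi 0) hpow
          hV.contDiff (mod_cast hk) x hpowbound hVbound
    _ ≤ N ! * C * D ^ N := by gcongr

/-- Normalizing `V` to the value `1` at the given point makes the chain rule bound scale-free. -/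
protected theorem rpow (hV : SelfBoundedDerivs N A V) (p : ℝ) :
    ∃ B, SelfBoundedDerivs N B fun x => V x ^ p := by
  obtain ⟨B, hB⟩ := exists_norm_iteratedFDeriv_rpow_le (E := E) N A p
  refine ⟨B, hV.contDiff.rpow_const_of_ne fun x => (hV.pos x).ne',
    fun x => rpow_pos_of_pos (hV.pos x) p, fun k _ hkN x => ?_⟩
  have hVx := hV.pos x
  have hf : SelfBoundedDerivs N A ((V x)⁻¹ • V) := hV.const_smul (inv_pos.2 hVx)
  have hscale : (fun y => V y ^ p) = V x ^ p • fun y => ((V x)⁻¹ • V) y ^ p := by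
    ext y
    rw [Pi.smul_apply, smul_eq_mul, ← mul_rpow hVx.le (hf.pos y).le, Pi.smul_apply, smul_eq_mul,
      mul_inv_cancel_left₀ hVx.ne']
  have hfp : ContDiff ℝ N fun y => ((V x)⁻¹ • V) y ^ p :=
    hf.contDiff.rpow_const_of_ne fun y => (hf.pos y).ne'
  rw [hscale, iteratedFDeriv_const_smul_apply (hfp.contDiffAt.of_le (mod_cast hkN)), norm_smul,
    norm_of_nonneg (rpow_nonneg hVx.le p), mul_comm]
  gcongr
  exact hB _ x hf (inv_mul_cancel₀ hVx.ne') k hkN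

end NormedSpace

end SelfBoundedDerivs

section Gaussian

theorem integrable_bilin_self {α E : Type*} [MeasurableSpace α] [NormedAddCommGroup E]
    [NormedSpace ℝ E] {μ : Measure α} {f : α → E} (hf : MemLp f 2 μ) (B : E →L[ℝ] E →L[ℝ] ℝ) :
    Integrable (fun ω => B (f ω) (f ω)) μ :=
  memLp_one_iff_integrable.1 (B.memLp_of_bilin 1 hf hf)

variable {E : Type*} [NormedAddCommGroup E] [MeasurableSpace E] [BorelSpace E]

theorem integrable_exp_mul_norm [NormedSpace ℝ E] [CompleteSpace E] [SecondCountableTopology E]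
    (μ : Measure E) [IsGaussian μ] (c : ℝ) : Integrable (fun ξ => exp (c * ‖ξ‖)) μ := by
  obtain ⟨C, hC, hint⟩ := IsGaussian.exists_integrable_exp_sq μ
  refine (hint.const_mul (exp (c ^ 2 / (4 * C)))).mono' (by fun_prop) (ae_of_all _ fun ξ => ?_)
  rw [norm_of_nonneg (exp_pos _).le, ← exp_add, exp_le_exp]
  have hsq : c ^ 2 / (4 * C) + C * ‖ξ‖ ^ 2 - c * ‖ξ‖ = (c - 2 * C * ‖ξ‖) ^ 2 / (4 * C) := by
    field_simp
    ring
  have hnonneg : 0 ≤ (c - 2 * C * ‖ξ‖) ^ 2 / (4 * C) := by positivity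
  linarith

theorem integrable_pow_mul_exp_norm [NormedSpace ℝ E] [CompleteSpace E]
    [SecondCountableTopology E] (μ : Measure E) [IsGaussian μ] {r σ : ℝ} (hr : 0 ≤ r)
    (hσ : 0 ≤ σ) (k : ℕ) (c : ℝ) :
    Integrable (fun ξ => (r + σ * ‖ξ‖) ^ k * exp (c * (r + σ * ‖ξ‖))) μ := by
  refine ((integrable_exp_mul_norm μ ((c + 1) * σ)).const_mul (k ! * exp ((c + 1) * r))).mono'
    (by fun_prop) (ae_of_all _ fun ξ => ?_)
  have hρ : 0 ≤ r + σ * ‖ξ‖ := by positivity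
  have hpow : (r + σ * ‖ξ‖) ^ k ≤ k ! * exp (r + σ * ‖ξ‖) :=
    (div_le_iff₀' (by positivity)).1 (pow_div_factorial_le_exp _ hρ k)
  rw [norm_of_nonneg (by positivity)]
  calc (r + σ * ‖ξ‖) ^ k * exp (c * (r + σ * ‖ξ‖))
      ≤ k ! * exp (r + σ * ‖ξ‖) * exp (c * (r + σ * ‖ξ‖)) := by gcongr
    _ = k ! * exp ((c + 1) * r) * exp ((c + 1) * σ * ‖ξ‖) := by
      rw [mul_assoc, mul_assoc, ← exp_add, ← exp_add]
      ring_nf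

variable [InnerProductSpace ℝ E] [FiniteDimensional ℝ E]

theorem integral_inner_mul_inner_stdGaussian (x y : E) :
    ∫ ξ, ⟪x, ξ⟫_ℝ * ⟪y, ξ⟫_ℝ ∂ProbabilityTheory.stdGaussian E = ⟪x, y⟫_ℝ := by
  have hcov := ProbabilityTheory.covarianceBilin_apply
    (IsGaussian.memLp_two_id (μ := ProbabilityTheory.stdGaussian E)) x y
  simp only [ProbabilityTheory.covarianceBilin_stdGaussian,
    ProbabilityTheory.integral_id_stdGaussian, sub_zero, id] at hcov
  exact hcov.symm

theorem integral_bilin_stdGaussian {ι : Type*} [Fintype ι] (b : OrthonormalBasis ι ℝ E)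
    (B : E →L[ℝ] E →L[ℝ] ℝ) :
    ∫ ξ, B ξ ξ ∂ProbabilityTheory.stdGaussian E = ∑ i, B (b i) (b i) := by
  classical
  have hexpand (ξ : E) : B ξ ξ = ∑ i, ∑ j, B (b i) (b j) * (⟪b i, ξ⟫_ℝ * ⟪b j, ξ⟫_ℝ) := by
    conv_lhs => rw [← b.sum_repr' ξ]
    simp only [map_sum, map_smul, sum_apply, smul_apply, smul_eq_mul, Finset.mul_sum]
    rw [Finset.sum_comm]
    refine Finset.sum_congr rfl fun i _ => Finset.sum_congr rfl fun j _ => ?_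
    ring
  have hint (i j : ι) : Integrable (fun ξ => B (b i) (b j) * (⟪b i, ξ⟫_ℝ * ⟪b j, ξ⟫_ℝ))
      (ProbabilityTheory.stdGaussian E) :=
    (integrable_bilin_self IsGaussian.memLp_two_id
      ((innerSL ℝ (b i)).smulRight (innerSL ℝ (b j)))).const_mul _
  simp_rw [hexpand]
  rw [integral_finsetSum _ fun i _ => integrable_finsetSum _ fun j _ => hint i j]
  refine Finset.sum_congr rfl fun i _ => ?_
  rw [integral_finsetSum _ fun j _ => hint i j]
  simp [integral_const_mul, integral_inner_mul_inner_stdGaussian, b.inner_eq_ite]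

end Gaussian

section Laplacian

variable {E : Type*} [NormedAddCommGroup E] [InnerProductSpace ℝ E] [FiniteDimensional ℝ E]

theorem laplacian_eq_sum_fderiv_fderiv {ι : Type*} [Fintype ι] (b : OrthonormalBasis ι ℝ E)
    (f : E → ℝ) (x : E) : Δ f x = ∑ i, fderiv ℝ (fderiv ℝ f) x (b i) (b i) := by
  simp [InnerProductSpace.laplacian_eq_iteratedFDeriv_orthonormalBasis f b,
    iteratedFDeriv_two_apply]

theorem laplacian_comp {g : ℝ → ℝ} {f : E → ℝ} {x : E} (hg : ContDiffAt ℝ 2 g (f x))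
    (hf : ContDiffAt ℝ 2 f x) :
    Δ (fun y => g (f y)) x = deriv (deriv g) (f x) * ‖∇ f x‖ ^ 2 + deriv g (f x) * Δ f x := by
  have hfirst : fderiv ℝ (fun y => g (f y)) =ᶠ[nhds x]
      fun y => deriv g (f y) • fderiv ℝ f y := by
    filter_upwards [hf.eventually (by simp), hf.continuousAt.eventually (hg.eventually (by simp))]
      with y hfy hgy
    exact ((hgy.differentiableAt two_ne_zero).hasDerivAt.comp_hasFDerivAt y
      (hfy.differentiableAt two_ne_zero).hasFDerivAt).fderiv
  have hderiv : HasFDerivAt (fun y => deriv g (f y)) (deriv (deriv g) (f x) • fderiv ℝ f x) x := by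
    have hg' : DifferentiableAt ℝ (deriv g) (f x) :=
      (hg.derivWithin (m := 1) (by norm_num)).differentiableAt one_ne_zero
    exact hg'.hasDerivAt.comp_hasFDerivAt x (hf.differentiableAt two_ne_zero).hasFDerivAt
  have hfderiv : HasFDerivAt (fderiv ℝ f) (fderiv ℝ (fderiv ℝ f) x) x :=
    ((hf.fderiv_right (m := 1) le_rfl).differentiableAt one_ne_zero).hasFDerivAt
  have hsecond (v : E) : fderiv ℝ (fderiv ℝ fun y => g (f y)) x v v =
      deriv (deriv g) (f x) * ⟪∇ f x, v⟫_ℝ ^ 2 + deriv g (f x) * fderiv ℝ (fderiv ℝ f) x v v := by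
    rw [hfirst.fderiv_eq, (hderiv.fun_smul hfderiv).fderiv]
    simp [inner_gradient_left]
    ring
  set b := stdOrthonormalBasis ℝ E
  simp_rw [laplacian_eq_sum_fderiv_fderiv b, hsecond, Finset.sum_add_distrib, ← Finset.mul_sum,
    b.sum_sq_inner_left]

end Laplacian

section Gaussian

variable {E : Type*} [NormedAddCommGroup E] [InnerProductSpace ℝ E] [FiniteDimensional ℝ E]
  [MeasurableSpace E] [BorelSpace E]

theorem integral_fderiv_fderiv_add_smul_stdGaussian (V : E → ℝ) (x w : E) (s : ℝ) :
    ∫ ξ, fderiv ℝ (fderiv ℝ V) x (w + s • ξ) (w + s • ξ) ∂ProbabilityTheory.stdGaussian E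
      = fderiv ℝ (fderiv ℝ V) x w w + s ^ 2 * Δ V x := by
  set B := fderiv ℝ (fderiv ℝ V) x
  have hexpand (ξ : E) : B (w + s • ξ) (w + s • ξ)
      = B w w + (s • (B w + B.flip w)) ξ + s ^ 2 * B ξ ξ := by
    simp
    ring
  have hlin : Integrable (s • (B w + B.flip w)) (ProbabilityTheory.stdGaussian E) :=
    (s • (B w + B.flip w)).integrable_comp IsGaussian.integrable_id
  have haffine : Integrable (fun ξ => B w w + (s • (B w + B.flip w)) ξ)
      (ProbabilityTheory.stdGaussian E) := (integrable_const _).add hlin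
  have hquad : Integrable (fun ξ => s ^ 2 * B ξ ξ) (ProbabilityTheory.stdGaussian E) :=
    (integrable_bilin_self IsGaussian.memLp_two_id B).const_mul _
  simp_rw [hexpand]
  rw [integral_add haffine hquad, integral_add (integrable_const _) hlin,
    ProbabilityTheory.integral_strongDual_stdGaussian, integral_const_mul,
    integral_bilin_stdGaussian (stdOrthonormalBasis ℝ E),
    laplacian_eq_sum_fderiv_fderiv (stdOrthonormalBasis ℝ E)]
  simp [B]

theorem memLp_two_add_smul_stdGaussian (w : E) (s : ℝ) :
    MemLp (fun ξ => w + s • ξ) 2 (ProbabilityTheory.stdGaussian E) :=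
  (memLp_const w).add (IsGaussian.memLp_two_id.const_smul s)

theorem integral_add_smul_stdGaussian (w : E) (s : ℝ) :
    ∫ ξ, (w + s • ξ) ∂ProbabilityTheory.stdGaussian E = w := by
  have hsmul : Integrable (fun ξ => s • ξ) (ProbabilityTheory.stdGaussian E) :=
    IsGaussian.integrable_id.smul s
  rw [integral_add (integrable_const w) hsmul, integral_smul,
    ProbabilityTheory.integral_id_stdGaussian]
  simp

end Gaussian

namespace SelfBoundedDerivs

section InnerProductSpace

variable {E : Type*} [NormedAddCommGroup E] [InnerProductSpace ℝ E] [FiniteDimensional ℝ E]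
  {N : ℕ} {B : ℝ} {V : E → ℝ}

theorem norm_gradient_le (hV : SelfBoundedDerivs N B V) (hN : 1 ≤ N)
    (x : E) : ‖∇ V x‖ ≤ B * V x := by
  simpa [gradient] using hV.norm_fderiv_le hN x

theorem norm_smul_gradient_le (hV : SelfBoundedDerivs N B V) (hN : 1 ≤ N) {h η : ℝ} {x : E}
    (hh : 0 ≤ h) (hη : √h * V x ≤ η) : ‖h • ∇ V x‖ ≤ √h * (η * B) := by
  have hB : 0 ≤ B := hV.bound_nonneg hN
  calc ‖h • ∇ V x‖ = h * ‖∇ V x‖ := by rw [norm_smul, norm_of_nonneg hh]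
    _ ≤ h * (B * V x) := by gcongr; exact hV.norm_gradient_le hN x
    _ = √h * (√h * V x * B) := by linear_combination -(B * V x) * sq_sqrt hh
    _ ≤ √h * (η * B) := by gcongr

theorem laplacian_le (hV : SelfBoundedDerivs N B V) (hN : 2 ≤ N) (x : E) :
    Δ V x ≤ Module.finrank ℝ E * (B * V x) := by
  set b := stdOrthonormalBasis ℝ E
  rw [laplacian_eq_sum_fderiv_fderiv b]
  have hterm (i) : fderiv ℝ (fderiv ℝ V) x (b i) (b i) ≤ B * V x := by
    simpa using hV.fderiv_fderiv_le hN x (b i)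
  simpa using Finset.sum_le_card_nsmul Finset.univ _ _ fun i _ => hterm i

variable [MeasurableSpace E] [BorelSpace E]

theorem integrable_map_add_smul (hV : SelfBoundedDerivs N B V) (hN : 1 ≤ N) (x : E) (s : ℝ) :
    Integrable (fun ξ => V (x + s • ξ)) (ProbabilityTheory.stdGaussian E) := by
  have hcont : Continuous V := hV.contDiff.continuous
  refine ((integrable_exp_mul_norm (ProbabilityTheory.stdGaussian E) (B * |s|)).const_mul
    (V x)).mono' (by fun_prop) (ae_of_all _ fun ξ => ?_)
  rw [norm_of_nonneg (hV.pos _).le]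
  simpa [norm_smul, mul_assoc] using hV.map_add_le hN x (s • ξ)

theorem integral_map_add_smul_le (hV : SelfBoundedDerivs 3 B V) (x : E) {w : E} {t r σ : ℝ}
    (ht : 0 ≤ t) (ht1 : t ≤ 1) (hr : 0 ≤ r) (hσ : 0 ≤ σ) (hw : ‖w‖ ≤ t * r) :
    ∫ ξ, V (x + (w + (t * σ) • ξ)) ∂ProbabilityTheory.stdGaussian E
      ≤ V x + fderiv ℝ V x w + (fderiv ℝ (fderiv ℝ V) x w w + (t * σ) ^ 2 * Δ V x) / 2
        + B / 2 * V x * t ^ 3 * ∫ ξ, (r + σ * ‖ξ‖) ^ 3 * exp (B * (r + σ * ‖ξ‖))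
            ∂ProbabilityTheory.stdGaussian E := by
  have hV' : Integrable (fun ξ => V (x + (w + (t * σ) • ξ))) (ProbabilityTheory.stdGaussian E) := by
    simpa only [add_assoc] using hV.integrable_map_add_smul (by norm_num) (x + w) (t * σ)
  have hshift := memLp_two_add_smul_stdGaussian w (t * σ)
  have hlin := (fderiv ℝ V x).integrable_comp (hshift.integrable one_le_two)
  have haffine := (integrable_const (μ := ProbabilityTheory.stdGaussian E) (V x)).fun_add hlin
  have hquad := (integrable_bilin_self hshift (fderiv ℝ (fderiv ℝ V) x)).div_const 2
  have hrem := (integrable_pow_mul_exp_norm (ProbabilityTheory.stdGaussian E) hr hσ 3 B).const_mul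
    (B / 2 * V x * t ^ 3)
  have hmean : ∫ ξ, fderiv ℝ V x (w + (t * σ) • ξ) ∂ProbabilityTheory.stdGaussian E
      = fderiv ℝ V x w := by
    rw [(fderiv ℝ V x).integral_comp_comm (hshift.integrable one_le_two),
      integral_add_smul_stdGaussian]
  refine (integral_mono hV' ((haffine.fun_add hquad).fun_add hrem)
    (hV.map_add_add_smul_le x ht ht1 hr hσ hw)).trans_eq ?_
  rw [integral_add (haffine.fun_add hquad) hrem, integral_add haffine hquad,
    integral_add (integrable_const _) hlin, hmean,
    integral_div, integral_fderiv_fderiv_add_smul_stdGaussian, integral_const_mul]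
  simp

end InnerProductSpace

end SelfBoundedDerivs

section EulerScheme

variable {E : Type*} [NormedAddCommGroup E] [InnerProductSpace ℝ E] [FiniteDimensional ℝ E]
  {A B β : ℝ} {U V : E → ℝ}

/-- One forward Euler step of size `h` for the Langevin equation `dX = -∇U dt + √(2/β) dW`, started
at `x` and driven by the increment `ξ`. -/
def eulerStep (β h : ℝ) (U : E → ℝ) (x ξ : E) : E :=
  x - h • ∇ U x + √(2 * β⁻¹ * h) • ξ

/-- The generator `β⁻¹ Δ - ∇U · ∇` of the Langevin equation, applied to a test function `V`. -/
def langevinGenerator (β : ℝ) (U V : E → ℝ) (x : E) : ℝ :=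
  β⁻¹ * Δ V x - ⟪∇ U x, ∇ V x⟫_ℝ

theorem langevinGenerator_comp_self {g : ℝ → ℝ} {x : E} (hg : ContDiffAt ℝ 2 g (U x))
    (hU : ContDiffAt ℝ 2 U x) :
    langevinGenerator β U (fun y => g (U y)) x =
      deriv g (U x) * (β⁻¹ * Δ U x - ‖∇ U x‖ ^ 2) + β⁻¹ * deriv (deriv g) (U x) * ‖∇ U x‖ ^ 2 := by
  have hinner : ⟪∇ U x, ∇ (fun y => g (U y)) x⟫_ℝ = deriv g (U x) * ‖∇ U x‖ ^ 2 := by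
    have hcomp : HasFDerivAt (fun y => g (U y)) (deriv g (U x) • fderiv ℝ U x) x :=
      (hg.differentiableAt two_ne_zero).hasDerivAt.comp_hasFDerivAt x
        (hU.differentiableAt two_ne_zero).hasFDerivAt
    rw [real_inner_comm, inner_gradient_left, hcomp.fderiv, smul_apply, ← inner_gradient_left,
      real_inner_self_eq_norm_sq, smul_eq_mul]
  rw [langevinGenerator, laplacian_comp hg hU, hinner]
  ring

theorem langevinGenerator_rpow {x : E} (hβ : β ≠ 0) (hU : ContDiffAt ℝ 2 U x) (hx : 0 < U x)
    (p : ℝ) :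
    langevinGenerator β U (fun y => U y ^ p) x =
      p * β⁻¹ * U x ^ (p - 1) * (Δ U x - (β - (p - 1) / U x) * ‖∇ U x‖ ^ 2) := by
  have hpow : U x ^ (p - 1 - 1) = U x ^ (p - 1) / U x := rpow_sub_one hx.ne' _
  have hsecond : deriv (deriv fun s : ℝ => s ^ p) (U x) = p * ((p - 1) * U x ^ (p - 1 - 1)) := by
    simp only [Real.deriv_rpow_const', deriv_const_mul_field]
  rw [langevinGenerator_comp_self (contDiffAt_rpow_const_of_ne hx.ne') hU, hsecond,
    Real.deriv_rpow_const, hpow]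
  field_simp
  ring

theorem langevinGenerator_rpow_le {x : E} {c d p : ℝ} (hβ : 0 < β) (hU : ContDiffAt ℝ 2 U x)
    (hx : 0 < U x) (hp : 0 ≤ p) (hdrift : Δ U x ≤ c * ‖∇ U x‖ ^ 2 - d * U x)
    (hpx : p - 1 ≤ (β - c) * U x) :
    langevinGenerator β U (fun y => U y ^ p) x ≤ -(p * β⁻¹ * d) * U x ^ p := by
  have hquot : (p - 1) / U x ≤ β - c := (div_le_iff₀ hx).2 hpx
  have hbracket : Δ U x - (β - (p - 1) / U x) * ‖∇ U x‖ ^ 2 ≤ -d * U x := by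
    nlinarith [mul_le_mul_of_nonneg_right hquot (sq_nonneg ‖∇ U x‖)]
  calc langevinGenerator β U (fun y => U y ^ p) x
      = p * β⁻¹ * U x ^ (p - 1) * (Δ U x - (β - (p - 1) / U x) * ‖∇ U x‖ ^ 2) :=
        langevinGenerator_rpow hβ.ne' hU hx p
    _ ≤ p * β⁻¹ * U x ^ (p - 1) * (-d * U x) := by gcongr
    _ = -(p * β⁻¹ * d) * U x ^ p := by
        rw [rpow_sub_one hx.ne']
        field_simp

theorem langevinGenerator_le {M N : ℕ} (hU : SelfBoundedDerivs M A U) (hM : 1 ≤ M)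
    (hV : SelfBoundedDerivs N B V) (hN : 2 ≤ N) (hβ : 0 ≤ β) (x : E) :
    langevinGenerator β U V x ≤ (β⁻¹ * Module.finrank ℝ E * B + A * B * U x) * V x := by
  have hlap := mul_le_mul_of_nonneg_left (hV.laplacian_le hN x) (inv_nonneg.2 hβ)
  have hinner : -⟪∇ U x, ∇ V x⟫_ℝ ≤ A * U x * (B * V x) := by
    calc -⟪∇ U x, ∇ V x⟫_ℝ ≤ ‖∇ U x‖ * ‖∇ V x‖ :=
          (neg_le_abs _).trans (abs_real_inner_le_norm _ _)
      _ ≤ A * U x * (B * V x) := by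
          have hU' := hU.norm_gradient_le hM x
          gcongr
          · exact (norm_nonneg _).trans hU'
          · exact hV.norm_gradient_le (one_le_two.trans hN) x
  rw [langevinGenerator]
  linarith

theorem SelfBoundedDerivs.fderiv_fderiv_smul_gradient_le {M N : ℕ} {h η : ℝ} {x : E}
    (hV : SelfBoundedDerivs N B V) (hN : 2 ≤ N) (hU : SelfBoundedDerivs M A U) (hM : 1 ≤ M)
    (hh : 0 ≤ h) (hη : 0 ≤ η) (hη1 : η ≤ 1) (hηU : √h * U x ≤ η) :
    fderiv ℝ (fderiv ℝ V) x (h • ∇ U x) (h • ∇ U x) ≤ h * (η * (B * A ^ 2 * V x)) := by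
  have hB : 0 ≤ B := hV.bound_nonneg (one_le_two.trans hN)
  have hVx := hV.pos x
  calc fderiv ℝ (fderiv ℝ V) x (h • ∇ U x) (h • ∇ U x)
      ≤ B * V x * ‖h • ∇ U x‖ ^ 2 := hV.fderiv_fderiv_le hN x _
    _ ≤ B * V x * (√h * (η * A)) ^ 2 := by
        gcongr
        exact hU.norm_smul_gradient_le hM hh hηU
    _ = h * (η ^ 2 * (B * A ^ 2 * V x)) := by
        linear_combination (B * V x * (η * A) ^ 2) * sq_sqrt hh
    _ ≤ h * (η * (B * A ^ 2 * V x)) := by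
        gcongr
        exact pow_le_of_le_one hη hη1 two_ne_zero

variable [MeasurableSpace E] [BorelSpace E]

theorem SelfBoundedDerivs.integrable_eulerStep {N : ℕ} (hV : SelfBoundedDerivs N B V) (hN : 1 ≤ N)
    (β h : ℝ) (U : E → ℝ) (x : E) :
    Integrable (fun ξ => V (eulerStep β h U x ξ)) (ProbabilityTheory.stdGaussian E) :=
  hV.integrable_map_add_smul hN _ _

theorem SelfBoundedDerivs.exists_integral_eulerStep_le {M : ℕ} (hV : SelfBoundedDerivs 3 B V)
    (hU : SelfBoundedDerivs M A U) (hM : 1 ≤ M) (hβ : 0 ≤ β) :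
    ∃ P > 0, ∀ (h η : ℝ) (x : E), 0 ≤ h → √h ≤ η → η ≤ 1 → √h * U x ≤ η →
      ∫ ξ, V (eulerStep β h U x ξ) ∂ProbabilityTheory.stdGaussian E
        ≤ V x + h * (langevinGenerator β U V x + η * (P * V x)) := by
  have hA : 0 ≤ A := hU.bound_nonneg hM
  have hB : 0 ≤ B := hV.bound_nonneg (by norm_num)
  set σ := √(2 * β⁻¹)
  set R := ∫ ξ, (A + σ * ‖ξ‖) ^ 3 * exp (B * (A + σ * ‖ξ‖)) ∂ProbabilityTheory.stdGaussian E
  have hR : 0 ≤ R := integral_nonneg fun ξ => by positivity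
  have hP : 0 < B * (A ^ 2 + R) / 2 + 1 := by
    linarith [mul_nonneg hB (add_nonneg (sq_nonneg A) hR)]
  refine ⟨B * (A ^ 2 + R) / 2 + 1, hP, fun h η x hh hη hη1 hηU => ?_⟩
  have hVx := hV.pos x
  have hη0 : 0 ≤ η := (sqrt_nonneg h).trans hη
  have hsq : √h ^ 2 = h := sq_sqrt hh
  set w := -(h • ∇ U x) with hw
  have hnorm : ‖w‖ ≤ √h * (η * A) := by
    rw [norm_neg]
    exact hU.norm_smul_gradient_le hM hh hηU
  have hfirst : fderiv ℝ V x w = -(h * ⟪∇ U x, ∇ V x⟫_ℝ) := by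
    rw [← inner_gradient_left, hw, inner_neg_right, inner_smul_right, real_inner_comm]
  have hsecond : fderiv ℝ (fderiv ℝ V) x w w ≤ h * (η * (B * A ^ 2 * V x)) := by
    simpa [hw] using hV.fderiv_fderiv_smul_gradient_le (by norm_num) hU hM hh hη0 hη1 hηU
  have hthird : B / 2 * V x * √h ^ 3 * R ≤ h * (η * (B / 2 * V x * R)) := by
    calc B / 2 * V x * √h ^ 3 * R = h * (√h * (B / 2 * V x * R)) := by
          linear_combination (B / 2 * V x * √h * R) * hsq
      _ ≤ h * (η * (B / 2 * V x * R)) := by gcongr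
  have hstep (ξ : E) : eulerStep β h U x ξ = x + (w + (√h * σ) • ξ) := by
    rw [eulerStep, sqrt_mul (by positivity), mul_comm √h, sub_eq_add_neg, add_assoc]
  have hexp := hV.integral_map_add_smul_le (σ := σ) x (sqrt_nonneg h) (hη.trans hη1) hA
    (sqrt_nonneg _) (hnorm.trans (by gcongr; exact mul_le_of_le_one_left hA hη1))
  have hdiff : (√h * σ) ^ 2 = 2 * (h * β⁻¹) := by
    rw [mul_pow, hsq, sq_sqrt (by positivity)]
    ring
  simp_rw [hstep]
  rw [hdiff, hfirst] at hexp
  have hslack : 0 ≤ h * (η * V x) := by positivity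
  rw [langevinGenerator]
  linarith

end EulerScheme

theorem integral_min_rpow_le {Ω : Type*} [MeasurableSpace Ω] {μ : Measure Ω}
    [IsProbabilityMeasure μ] {f : Ω → ℝ} {u M k p : ℝ} (hf : ∀ ω, 0 ≤ f ω) (hM : 0 ≤ M)
    (hk : 0 ≤ k) (hp : 0 ≤ p) (hint : Integrable (fun ω => f ω ^ p) μ)
    (hbound : u < M → ∫ ω, f ω ^ p ∂μ ≤ u ^ p + k) :
    ∫ ω, min (f ω) M ^ p ∂μ ≤ min u M ^ p + k := by
  have hmin (ω : Ω) : 0 ≤ min (f ω) M := le_min (hf ω) hM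
  have hnonneg : 0 ≤ᵐ[μ] fun ω => min (f ω) M ^ p := ae_of_all _ fun ω => rpow_nonneg (hmin ω) p
  rcases lt_or_ge u M with hu | hu
  · rw [min_eq_left hu.le]
    refine (integral_mono_of_nonneg hnonneg hint (ae_of_all _ fun ω => ?_)).trans (hbound hu)
    exact rpow_le_rpow (hmin ω) (min_le_left _ _) hp
  · rw [min_eq_right hu]
    have hcap : ∫ ω, min (f ω) M ^ p ∂μ ≤ ∫ _, M ^ p ∂μ :=
      integral_mono_of_nonneg hnonneg (integrable_const _)
        (ae_of_all _ fun ω => rpow_le_rpow (hmin ω) (min_le_right _ _) hp)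
    rw [integral_const, probReal_univ, one_smul] at hcap
    linarith

section Drift

variable {E : Type*} [NormedAddCommGroup E] [InnerProductSpace ℝ E] [FiniteDimensional ℝ E]
  {A B β c d R : ℝ} {U V : E → ℝ}

theorem exists_langevinGenerator_rpow_le (hβ : 0 < β) (hU : SelfBoundedDerivs 3 A U) (hc : c < β)
    (hd : 0 < d) (hdrift : ∀ x, R < U x → Δ U x ≤ c * ‖∇ U x‖ ^ 2 - d * U x) {p : ℝ}
    (hp : 0 < p) :
    ∃ κ > 0, ∃ r ≥ 1, ∀ x, r < U x →
      langevinGenerator β U (fun y => U y ^ p) x ≤ -κ * U x ^ p := by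
  refine ⟨p * β⁻¹ * d, by positivity, max (max R ((p - 1) / (β - c))) 1, le_max_right _ _,
    fun x hx => ?_⟩
  obtain ⟨⟨hR, hpx⟩, -⟩ := (max_lt_iff.trans (and_congr_left' max_lt_iff)).1 hx
  exact langevinGenerator_rpow_le hβ (hU.contDiff.contDiffAt.of_le (by norm_num)) (hU.pos x) hp.le
    (hdrift x hR) ((div_le_iff₀' (sub_pos.2 hc)).1 hpx.le)

variable [MeasurableSpace E] [BorelSpace E]

theorem exists_integral_eulerStep_le_add (hβ : 0 ≤ β) (hU : SelfBoundedDerivs 3 A U)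
    (hV : SelfBoundedDerivs 3 B V) {κ r s : ℝ} (hκ : 0 < κ) (hr : 1 ≤ r)
    (houter : ∀ x, r < U x → langevinGenerator β U V x ≤ -κ * V x)
    (hinner : ∀ x, U x ≤ r → V x ≤ s) :
    ∃ a > 0, ∃ K > 0, ∀ h, 0 < h → h < 1 → ∀ x, √h * U x ≤ a →
      ∫ ξ, V (eulerStep β h U x ξ) ∂ProbabilityTheory.stdGaussian E ≤ V x + h * K := by
  obtain ⟨P, hP, hstep⟩ := hV.exists_integral_eulerStep_le hU (by norm_num) hβ
  have hA : 0 ≤ A := hU.bound_nonneg (by norm_num)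
  have hB : 0 ≤ B := hV.bound_nonneg (by norm_num)
  set L := β⁻¹ * Module.finrank ℝ E * B + A * B * r
  have hL : 0 ≤ L := by positivity
  have hK : 0 < (L + P) * max s 1 :=
    mul_pos (add_pos_of_nonneg_of_pos hL hP) (lt_max_of_lt_right one_pos)
  refine ⟨min 1 (κ / P), by positivity, (L + P) * max s 1, hK, fun h hh hh1 x hx => ?_⟩
  set a := min 1 (κ / P)
  have ha1 : a ≤ 1 := min_le_left _ _
  have hVx := hV.pos x
  have hh0 := hh.le
  rcases le_or_gt (U x) r with hUr | hUr
  · have hgen : langevinGenerator β U V x ≤ L * V x :=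
      (langevinGenerator_le hU (by norm_num) hV (by norm_num) hβ x).trans <|
        mul_le_mul_of_nonneg_right (by simp only [L]; gcongr) hVx.le
    calc ∫ ξ, V (eulerStep β h U x ξ) ∂ProbabilityTheory.stdGaussian E
        ≤ V x + h * (langevinGenerator β U V x + 1 * (P * V x)) :=
          hstep h 1 x hh0 (sqrt_le_one.2 hh1.le) le_rfl (hx.trans ha1)
      _ ≤ V x + h * (L * V x + 1 * (P * V x)) := by gcongr
      _ = V x + h * ((L + P) * V x) := by ring
      _ ≤ V x + h * ((L + P) * max s 1) := by
          gcongr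
          exact (hinner x hUr).trans (le_max_left _ _)
  · have ha : √h ≤ a :=
      (le_mul_of_one_le_right (sqrt_nonneg h) (hr.trans hUr.le)).trans hx
    have haP : a * P ≤ κ := (le_div_iff₀ hP).1 (min_le_right _ _)
    calc ∫ ξ, V (eulerStep β h U x ξ) ∂ProbabilityTheory.stdGaussian E
        ≤ V x + h * (langevinGenerator β U V x + a * (P * V x)) := hstep h a x hh0 ha ha1 hx
      _ ≤ V x + h * (-κ * V x + κ * V x) := by
          rw [← mul_assoc a]
          gcongr
          exact houter x hUr
      _ ≤ V x + h * ((L + P) * max s 1) := by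
          rw [neg_mul, neg_add_cancel]
          gcongr

theorem euler_truncated_drift_general (hβ : 0 < β) (hU : SelfBoundedDerivs 3 A U) (hc : c < β)
    (hd : 0 < d) (hdrift : ∀ x, R < U x → Δ U x ≤ c * ‖∇ U x‖ ^ 2 - d * U x) {p : ℝ}
    (hp : 0 < p) :
    ∃ a > 0, ∃ K > 0, ∀ h : ℝ, 0 < h → h < 1 → ∀ x,
      ∫ ξ, min (U (eulerStep β h U x ξ)) (a * h ^ (-(1 : ℝ) / 2)) ^ p
          ∂ProbabilityTheory.stdGaussian E
        ≤ min (U x) (a * h ^ (-(1 : ℝ) / 2)) ^ p + h * K := by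
  obtain ⟨κ, hκ, r, hr, hgen⟩ := exists_langevinGenerator_rpow_le hβ hU hc hd hdrift hp
  obtain ⟨B, hV⟩ := hU.rpow p
  obtain ⟨a, ha, K, hK, hstep⟩ := exists_integral_eulerStep_le_add hβ.le hU hV hκ hr hgen
    fun x hx => rpow_le_rpow (hU.pos x).le hx hp.le
  refine ⟨a, ha, K, hK, fun h hh hh1 x => ?_⟩
  have hpow : h ^ (-(1 : ℝ) / 2) = (√h)⁻¹ := by rw [neg_div, rpow_neg hh.le, sqrt_eq_rpow]
  refine integral_min_rpow_le (fun ξ => (hU.pos _).le) (by positivity) (by positivity) hp.le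
    (hV.integrable_eulerStep (by norm_num) β h U x) fun hlt => hstep h hh hh1 x ?_
  rw [hpow, ← div_eq_mul_inv, lt_div_iff₀' (sqrt_pos.2 hh)] at hlt
  exact hlt.le

end Drift

theorem integrable_exp_neg_sq_norm_div_two {E : Type*} [NormedAddCommGroup E]
    [InnerProductSpace ℝ E] [FiniteDimensional ℝ E] [MeasurableSpace E] [BorelSpace E] :
    Integrable fun ξ : E => exp (-‖ξ‖ ^ 2 / 2) := by
  refine (GaussianFourier.integrable_cexp_neg_mul_sq_norm_add (V := E) (b := 1 / 2)
    (by norm_num) 0 0).norm.congr (ae_of_all _ fun ξ => ?_)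
  simp [Complex.norm_exp, ← Complex.ofReal_pow, div_eq_inv_mul]

instance isFiniteMeasure_stdGaussian (n : ℕ) : IsFiniteMeasure (stdGaussian n) :=
  isFiniteMeasure_withDensity_ofReal (integrable_exp_neg_sq_norm_div_two.const_mul _).2

theorem charFun_stdGaussian (n : ℕ) (t : Euc n) :
    charFun (stdGaussian n) t = Complex.exp (-‖t‖ ^ 2 / 2) := by
  set C : ℝ := (2 * π) ^ (-(n : ℝ) / 2)
  have hintegrand (ξ : Euc n) : (ENNReal.ofReal (C * exp (-‖ξ‖ ^ 2 / 2))).toReal •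
        Complex.exp (⟪ξ, t⟫_ℝ * Complex.I) =
      C * Complex.exp (-(1 / 2) * ‖ξ‖ ^ 2 + Complex.I * ⟪t, ξ⟫_ℝ) := by
    rw [ENNReal.toReal_ofReal (by positivity), Complex.real_smul, Complex.exp_add, real_inner_comm]
    push_cast
    rw [mul_assoc]
    ring_nf
  have hnormalize : (C : ℂ) * (π / (1 / 2)) ^ ((Module.finrank ℝ (Euc n) : ℂ) / 2) = 1 := by
    have hbase : ((π : ℂ) / (1 / 2)) ^ ((Module.finrank ℝ (Euc n) : ℂ) / 2) =
        ((2 * π) ^ ((n : ℝ) / 2) : ℝ) := by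
      rw [Complex.ofReal_cpow (by positivity), finrank_euclideanSpace_fin]
      push_cast
      ring_nf
    rw [hbase, ← Complex.ofReal_mul, ← rpow_add (by positivity), neg_div, neg_add_cancel,
      rpow_zero, Complex.ofReal_one]
  rw [charFun_apply, stdGaussian,
    integral_withDensity_eq_integral_toReal_smul (by fun_prop) (by simp),
    integral_congr_ae (ae_of_all _ hintegrand), integral_const_mul,
    GaussianFourier.integral_cexp_neg_mul_sq_norm_add (by norm_num),
    ← mul_assoc, hnormalize, one_mul, Complex.I_sq]
  ring_nf

theorem stdGaussian_eq (n : ℕ) : stdGaussian n = ProbabilityTheory.stdGaussian (Euc n) := by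
  refine Measure.ext_of_charFun (funext fun t => ?_)
  rw [charFun_stdGaussian, ProbabilityTheory.charFun_stdGaussian]

theorem lapl_eq_laplacian {n : ℕ} (U : Euc n → ℝ) : lapl U = Δ U := by
  rw [InnerProductSpace.laplacian_eq_iteratedFDeriv_orthonormalBasis U
    (EuclideanSpace.basisFun (Fin n) ℝ)]
  ext x
  simp [lapl, D2]

theorem Assumption1.exists_selfBoundedDerivs {n : ℕ} {β : ℝ} {U : Euc n → ℝ}
    (hU : Assumption1 n β U) : ∃ A, SelfBoundedDerivs 3 A U := by
  obtain ⟨A, -, hA⟩ := hU.deriv_bound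
  refine ⟨A, hU.smooth.of_le (by norm_num), fun x => one_pos.trans_le (hU.one_le x),
    fun k hk1 hk3 x => ?_⟩
  obtain ⟨⟨⟨-, hthird⟩, hsecond⟩, hgradient⟩ :=
    (sup_le_iff.trans (and_congr_left' (sup_le_iff.trans (and_congr_left' sup_le_iff)))).1 (hA x)
  interval_cases k
  · simpa [gradient] using hgradient
  · exact hsecond
  · exact hthird

/-- Truncated drift condition for forward Euler. -/
theorem euler_truncated_drift (n : ℕ) (β : ℝ) (hβ : 0 < β)
    (U : Euc n → ℝ) (hU : Assumption1 n β U) (ℓ : ℝ) (hℓ : 1 < ℓ) :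
    ∃ a > (0:ℝ), ∃ K > (0:ℝ), ∀ h : ℝ, 0 < h → h < 1 → ∀ x : Euc n,
      (∫ ξ, (min (U (x - h • gradient U x + Real.sqrt (2 * β⁻¹ * h) • ξ))
              (a * h ^ (-(1:ℝ)/2))) ^ ℓ ∂(stdGaussian n))
        ≤ (min (U x) (a * h ^ (-(1:ℝ)/2))) ^ ℓ + h * K := by
  obtain ⟨A, hA⟩ := hU.exists_selfBoundedDerivs
  rw [stdGaussian_eq]
  exact euler_truncated_drift_general hβ hA hU.c_lt hU.d_pos
    (lapl_eq_laplacian U ▸ hU.driftB) (one_pos.trans hℓ)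

end
end
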